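/- Let p, q, a, b, c be positive integers and let s be a complex number with Re(s) > 1. Then S_{PU(4)}(p,q,a,b,c,s) = (1/4)(J₀ − J₁ + J₂ − J₃), where: J₀ := 2(−1)^p Σ_{j=0}^{⌊p/2⌋} ζ(2j) Σ_{ω=0}^{p−2j} C(ω+a−1,ω) C(p+c−2j−ω−1,c−1) T(q+a+ω,s,p+b+c−2j−ω;1,1) + 2(−1)^{p+a} Σ_{j=0}^{⌊c/2⌋} ζ(2j) Σ_{ω=0}^{c−2j} C(ω+a−1,ω) C(p+c−2j−ω−1,p−1) T(q,s+a+ω,p+b+c−2j−ω;1,1) + 2(−1)^p Σ_{j=0}^{⌊a/2⌋} ζ(2j) Σ_{ω=0}^{p−1} C(ω+a−2j,ω) C(p+c−2−ω,c−1) T(q+a−2j+ω+1,s,p+b+c−1−ω;1,1) + 2(−1)^{p+a} Σ_{j=0}^{⌊a/2⌋} ζ(2j) Σ_{ω=0}^{c−1} C(ω+a−2j,ω) C(p+c−2−ω,p−1) T(q,s+a−2j+ω+1,p+b+c−1−ω;1,1); J₂ := the same expression as J₀ with every ζ(2j) replaced by φ(2j) and the sign arguments of T in the four successive terms replaced by (1,−1),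 (−1,1), (−1,−1), (−1,−1); J₁ := (−1)^p Σ_{j=0}^{p} (−1)^j Λ(j;−i) Σ_{ω=0}^{p−j} C(ω+a−1,ω) C(p+c−j−ω−1,c−1) T(q+a+ω,s,p+b+c−j−ω;−1,i) + (−1)^{p+a} Σ_{j=0}^{c} Λ(j;−i) Σ_{ω=0}^{c−j} C(ω+a−1,ω) C(p+c−j−ω−1,p−1) T(q,s+a+ω,p+b+c−j−ω;−i,−1) + (−1)^p Σ_{j=0}^{a} Λ(j;−i) Σ_{ω=0}^{p−1} C(ω+a−j,ω) C(p+c−2−ω,c−1) T(q+a−j+ω+1,s,p+b+c−1−ω;−i,i) + (−1)^{p+a} Σ_{j=0}^{a} (−1)^j Λ(j;−i) Σ_{ω=0}^{c−1} C(ω+a−j,ω) C(p+c−2−ω,p−1) T(q,s+a−j+ω+1,p+b+c−1−ω;−i,i); and J₃ := the same expression as J₁ with every Λ(j;−i) replaced by Λ(j;i) and the sign arguments of T in the four successive terms replaced by (−1,−i), (i,−1), (i,−i), (i,−i). Here C(n,k) denotes the binomial coefficient. -/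

import Mathlib

open Complex Finset

/-- `φ(s) = (2^{1-s} - 1) ζ(s)` (with the convention `φ(1) = -log 2`). -/
noncomputable def phi (s : ℂ) : ℂ :=
  if s = 1 then -(Real.log 2 : ℂ) else ((2 : ℂ) ^ ((1 : ℂ) - s) - 1) * riemannZeta s

/-- The primitive Dirichlet character of conductor 4 with values in `ℂ`. -/
noncomputable def chi4 : DirichletCharacter ℂ 4 := ZMod.χ₄.ringHomComp (Int.castRingHom ℂ)

/-- `L(s,χ₄)`, equal to `Σ_{m ≥ 0} (-1)^m (2m+1)^{-s}` at the relevant arguments. -/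
noncomputable def Lchi4 (s : ℂ) : ℂ := DirichletCharacter.LFunction chi4 s

/-- `Λ(ξ;i)`. -/
noncomputable def LamI (ξ : ℕ) : ℂ :=
  if Even ξ then (2 : ℂ) ^ ((1 : ℤ) - ξ) * ((2 : ℂ) ^ ((1 : ℤ) - ξ) - 1) * riemannZeta ξ
  else 2 * Complex.I * Lchi4 ξ

/-- `Λ(ξ;-i)`. -/
noncomputable def LamNegI (ξ : ℕ) : ℂ :=
  if Even ξ then (2 : ℂ) ^ ((1 : ℤ) - ξ) * ((2 : ℂ) ^ ((1 : ℤ) - ξ) - 1) * riemannZeta ξ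
  else -(2 * Complex.I * Lchi4 ξ)

/-- `T(p,s,q;x,y) = Σ_{l ≠ 0, m ≥ 1, l+m ≠ 0} x^l y^m / (l^p m^s (l+m)^q)`. -/
noncomputable def T (p : ℕ) (s : ℂ) (q : ℕ) (x y : ℂ) : ℂ :=
  ∑' lm : ℤ × ℕ,
    if lm.1 ≠ 0 ∧ lm.1 + ((lm.2 : ℤ) + 1) ≠ 0 then
      x ^ lm.1 * y ^ (lm.2 + 1) /
        ((lm.1 : ℂ) ^ p * (((lm.2 + 1 : ℕ) : ℂ)) ^ s *
          (((lm.1 + (lm.2 : ℤ) + 1 : ℤ) : ℂ)) ^ q)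
    else 0

/-- Generic triple zeta-sum of type `A₃` with a weight `w` on `(l,m,n)`. -/
noncomputable def Z3 (w : ℕ → ℕ → ℕ → ℂ) (s₁ s₂ s₃ s₄ s₅ s₆ : ℂ) : ℂ :=
  ∑' t : ℕ × ℕ × ℕ,
    w (t.1 + 1) (t.2.1 + 1) (t.2.2 + 1) /
      ((((t.1 + 1 : ℕ) : ℂ)) ^ s₁ * (((t.2.1 + 1 : ℕ) : ℂ)) ^ s₂ *
        (((t.2.2 + 1 : ℕ) : ℂ)) ^ s₃ * (((t.1 + 1 + (t.2.1 + 1) : ℕ) : ℂ)) ^ s₄ *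
        (((t.2.1 + 1 + (t.2.2 + 1) : ℕ) : ℂ)) ^ s₅ *
        (((t.1 + 1 + (t.2.1 + 1) + (t.2.2 + 1) : ℕ) : ℂ)) ^ s₆)

/-- `ζ₃(s₁,…,s₆,0;PU(4))`: the sum is restricted to `l + 2m + 3n ≡ 2 (mod 4)`. -/
noncomputable def ZPU4 : ℂ → ℂ → ℂ → ℂ → ℂ → ℂ → ℂ :=
  Z3 (fun l m n => if (l + 2 * m + 3 * n) % 4 = 2 then 1 else 0)

/-- The twelve-term alternating combination `S` built from a six-variable zeta `Z`. -/
noncomputable def Scomb (Z : ℂ → ℂ → ℂ → ℂ → ℂ → ℂ → ℂ) (p q a b c : ℕ) (s : ℂ) : ℂ :=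
  Z p q s a b c + (-1 : ℂ) ^ p * Z p a s q c b + (-1 : ℂ) ^ (p + a) * Z q a c p s b +
    (-1 : ℂ) ^ (p + a + c) * Z q s c b a p + (-1 : ℂ) ^ q * Z a q b p s c +
    (-1 : ℂ) ^ (q + b) * Z a s b c q p + (-1 : ℂ) ^ (q + a) * Z a p b q c s +
    (-1 : ℂ) ^ (q + a + b) * Z a c b s p q + (-1 : ℂ) ^ (q + a + b + c) * Z s c p a b q +
    (-1 : ℂ) ^ (p + q + a) * Z q p c a b s + (-1 : ℂ) ^ (p + q + a + c) * Z q b c s p a +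
    (-1 : ℂ) ^ (p + q + a + b + c) * Z s b p q c a

/-- The right-hand side `J₀` (from the functional relation for `ζ₃(·;A₃)`). -/
noncomputable def J0 (p q a b c : ℕ) (s : ℂ) : ℂ :=
  2 * (-1 : ℂ) ^ p * ∑ j ∈ range (p / 2 + 1), riemannZeta (2 * j) *
      ∑ ω ∈ range (p - 2 * j + 1),
        (Nat.choose (ω + a - 1) ω : ℂ) * (Nat.choose (p + c - 2 * j - ω - 1) (c - 1) : ℂ) *
          T (q + a + ω) s (p + b + c - 2 * j - ω) 1 1 +
  2 * (-1 : ℂ) ^ (p + a) * ∑ j ∈ range (c / 2 + 1), riemannZeta (2 * j) *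
      ∑ ω ∈ range (c - 2 * j + 1),
        (Nat.choose (ω + a - 1) ω : ℂ) * (Nat.choose (p + c - 2 * j - ω - 1) (p - 1) : ℂ) *
          T q (s + a + ω) (p + b + c - 2 * j - ω) 1 1 +
  2 * (-1 : ℂ) ^ p * ∑ j ∈ range (a / 2 + 1), riemannZeta (2 * j) *
      ∑ ω ∈ range p,
        (Nat.choose (ω + a - 2 * j) ω : ℂ) * (Nat.choose (p + c - 2 - ω) (c - 1) : ℂ) *
          T (q + a - 2 * j + ω + 1) s (p + b + c - 1 - ω) 1 1 +
  2 * (-1 : ℂ) ^ (p + a) * ∑ j ∈ range (a / 2 + 1), riemannZeta (2 * j) *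
      ∑ ω ∈ range c,
        (Nat.choose (ω + a - 2 * j) ω : ℂ) * (Nat.choose (p + c - 2 - ω) (p - 1) : ℂ) *
          T q (s + ((a - 2 * j : ℕ) : ℂ) + ω + 1) (p + b + c - 1 - ω) 1 1

/-- The right-hand side `J₂` (from the functional relation for `ζ₃(·,λ₂∨;SU(4))`). -/
noncomputable def J2 (p q a b c : ℕ) (s : ℂ) : ℂ :=
  2 * (-1 : ℂ) ^ p * ∑ j ∈ range (p / 2 + 1), phi (2 * j) *
      ∑ ω ∈ range (p - 2 * j + 1),
        (Nat.choose (ω + a - 1) ω : ℂ) * (Nat.choose (p + c - 2 * j - ω - 1) (c - 1) : ℂ) *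
          T (q + a + ω) s (p + b + c - 2 * j - ω) 1 (-1) +
  2 * (-1 : ℂ) ^ (p + a) * ∑ j ∈ range (c / 2 + 1), phi (2 * j) *
      ∑ ω ∈ range (c - 2 * j + 1),
        (Nat.choose (ω + a - 1) ω : ℂ) * (Nat.choose (p + c - 2 * j - ω - 1) (p - 1) : ℂ) *
          T q (s + a + ω) (p + b + c - 2 * j - ω) (-1) 1 +
  2 * (-1 : ℂ) ^ p * ∑ j ∈ range (a / 2 + 1), phi (2 * j) *
      ∑ ω ∈ range p,
        (Nat.choose (ω + a - 2 * j) ω : ℂ) * (Nat.choose (p + c - 2 - ω) (c - 1) : ℂ) *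
          T (q + a - 2 * j + ω + 1) s (p + b + c - 1 - ω) (-1) (-1) +
  2 * (-1 : ℂ) ^ (p + a) * ∑ j ∈ range (a / 2 + 1), phi (2 * j) *
      ∑ ω ∈ range c,
        (Nat.choose (ω + a - 2 * j) ω : ℂ) * (Nat.choose (p + c - 2 - ω) (p - 1) : ℂ) *
          T q (s + ((a - 2 * j : ℕ) : ℂ) + ω + 1) (p + b + c - 1 - ω) (-1) (-1)

/-- The right-hand side `J₁` (from the functional relation for `ζ₃(·,λ₁∨;SU(4))`). -/
noncomputable def J1 (p q a b c : ℕ) (s : ℂ) : ℂ :=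
  (-1 : ℂ) ^ p * ∑ j ∈ range (p + 1), (-1 : ℂ) ^ j * LamNegI j *
      ∑ ω ∈ range (p - j + 1),
        (Nat.choose (ω + a - 1) ω : ℂ) * (Nat.choose (p + c - j - ω - 1) (c - 1) : ℂ) *
          T (q + a + ω) s (p + b + c - j - ω) (-1) Complex.I +
  (-1 : ℂ) ^ (p + a) * ∑ j ∈ range (c + 1), LamNegI j *
      ∑ ω ∈ range (c - j + 1),
        (Nat.choose (ω + a - 1) ω : ℂ) * (Nat.choose (p + c - j - ω - 1) (p - 1) : ℂ) *
          T q (s + a + ω) (p + b + c - j - ω) (-Complex.I) (-1) +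
  (-1 : ℂ) ^ p * ∑ j ∈ range (a + 1), LamNegI j *
      ∑ ω ∈ range p,
        (Nat.choose (ω + a - j) ω : ℂ) * (Nat.choose (p + c - 2 - ω) (c - 1) : ℂ) *
          T (q + a - j + ω + 1) s (p + b + c - 1 - ω) (-Complex.I) Complex.I +
  (-1 : ℂ) ^ (p + a) * ∑ j ∈ range (a + 1), (-1 : ℂ) ^ j * LamNegI j *
      ∑ ω ∈ range c,
        (Nat.choose (ω + a - j) ω : ℂ) * (Nat.choose (p + c - 2 - ω) (p - 1) : ℂ) *
          T q (s + ((a - j : ℕ) : ℂ) + ω + 1) (p + b + c - 1 - ω) (-Complex.I) Complex.I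

/-- The right-hand side `J₃` (from the functional relation for `ζ₃(·,λ₃∨;SU(4))`). -/
noncomputable def J3 (p q a b c : ℕ) (s : ℂ) : ℂ :=
  (-1 : ℂ) ^ p * ∑ j ∈ range (p + 1), (-1 : ℂ) ^ j * LamI j *
      ∑ ω ∈ range (p - j + 1),
        (Nat.choose (ω + a - 1) ω : ℂ) * (Nat.choose (p + c - j - ω - 1) (c - 1) : ℂ) *
          T (q + a + ω) s (p + b + c - j - ω) (-1) (-Complex.I) +
  (-1 : ℂ) ^ (p + a) * ∑ j ∈ range (c + 1), LamI j *
      ∑ ω ∈ range (c - j + 1),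
        (Nat.choose (ω + a - 1) ω : ℂ) * (Nat.choose (p + c - j - ω - 1) (p - 1) : ℂ) *
          T q (s + a + ω) (p + b + c - j - ω) Complex.I (-1) +
  (-1 : ℂ) ^ p * ∑ j ∈ range (a + 1), LamI j *
      ∑ ω ∈ range p,
        (Nat.choose (ω + a - j) ω : ℂ) * (Nat.choose (p + c - 2 - ω) (c - 1) : ℂ) *
          T (q + a - j + ω + 1) s (p + b + c - 1 - ω) Complex.I (-Complex.I) +
  (-1 : ℂ) ^ (p + a) * ∑ j ∈ range (a + 1), (-1 : ℂ) ^ j * LamI j *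
      ∑ ω ∈ range c,
        (Nat.choose (ω + a - j) ω : ℂ) * (Nat.choose (p + c - 2 - ω) (p - 1) : ℂ) *
          T q (s + ((a - j : ℕ) : ℂ) + ω + 1) (p + b + c - 1 - ω) Complex.I (-Complex.I)

/-!
The condition `l + 2m + 3n ≡ 2 (mod 4)` is a combination of the characters `k ↦ x ^ k` of `ℤ/4`,
`x ∈ {1, -i, -1, i}`. For each weight `x ^ (L + 2M + 3N)` the twelve signed terms of the alternating
combination are the contributions of the twelve Weyl chambers of type `A₃` with `N > 0` to one sum
over `L, M ∈ ℤ` and `N ≥ 1`, taken off the root hyperplanes. In that sum the inner series over `L`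
is evaluated by residues. If `Λ₀ = -1` and `Λⱼ = ∑ x ^ L / L ^ j` over `L ≠ 0`, then near an
integer `r` the symmetric sum of `x ^ L / (L - t)` is `x ^ r ∑ Λⱼ (t - r) ^ (j - 1)`, so summing
`x ^ L` against a rational function of `L` amounts to taking the residues of its product with this
function at its poles `0`, `-M`, `-(M + N)`. Expanding these residues by the binomial series leaves
sums over `(M, N)` of Tornheim type, which are the values of `T` in `Jᵢ`.
-/

open Filter Topology SummationFilter
open scoped PowerSeries LaurentSeries

section Residues

variable {ι : Type*} [DecidableEq ι]

lemma exponent_induction [Finite ι] {P : (ι → ℕ) → Prop}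
    (single : ∀ i (n : ℕ), P (Pi.single i (n + 1)))
    (step : ∀ (e : ι → ℕ) (i j : ι), i ≠ j → P (e + Pi.single i 1) → P (e + Pi.single j 1) →
      P (e + Pi.single i 1 + Pi.single j 1))
    {e : ι → ℕ} (he : e ≠ 0) : P e := by
  cases nonempty_fintype ι
  induction h : ∑ k, e k using Nat.strong_induction_on generalizing e with
  | _ n ih =>
    obtain ⟨i, hi : e i ≠ 0⟩ := Function.ne_iff.mp he
    by_cases hsupp : ∃ j, i ≠ j ∧ e j ≠ 0
    · obtain ⟨j, hij, hj⟩ := hsupp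
      obtain ⟨e', rfl⟩ : ∃ e' : ι → ℕ, e = e' + Pi.single i 1 + Pi.single j 1 := by
        refine ⟨e - Pi.single i 1 - Pi.single j 1, funext fun k => ?_⟩
        simp only [Pi.add_apply, Pi.sub_apply, Pi.single_apply]
        split_ifs <;> grind
      have hsum : ∀ k, ∑ m, (e' + Pi.single k 1 : ι → ℕ) m = ∑ m, e' m + 1 := fun k => by
        simp [sum_add_distrib]
      have hne : ∀ k, e' + Pi.single k 1 ≠ 0 := fun k hk => by simpa using congrFun hk k
      have hlt : ∑ m, e' m + 1 < n := by simp [← h, sum_add_distrib]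
      exact step e' i j hij (ih _ hlt (hne i) (hsum i)) (ih _ hlt (hne j) (hsum j))
    · push Not at hsupp
      have he_single : e = Pi.single i (e i - 1 + 1) := funext fun k => by
        rcases eq_or_ne k i with rfl | hki
        · simp; omega
        · simp [hki, hsupp k hki.symm]
      exact he_single ▸ single i (e i - 1)

variable {K : Type*} [Field K]

/-- The linear polynomial `t + d` as a Laurent series in `t`. -/
noncomputable def linearFactor (d : K) : K⸨X⸩ :=
  ((PowerSeries.X + PowerSeries.C d : K⟦X⟧) : K⸨X⸩)

lemma linearFactor_ne_zero (d : K) : linearFactor d ≠ 0 := by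
  intro h
  have := congrArg (HahnSeries.coeff · (1 : ℤ)) h
  have h1 := LaurentSeries.coeff_coe_powerSeries (PowerSeries.X + PowerSeries.C d : K⟦X⟧) 1
  simp_all [linearFactor]

lemma linearFactor_sub (d d' : K) :
    linearFactor d - linearFactor d' = HahnSeries.C (d - d') := by
  simp [linearFactor]

lemma linearFactor_zero : linearFactor (0 : K) = HahnSeries.single 1 1 := by
  simp [linearFactor]

lemma inv_linearFactor {d : K} (hd : d ≠ 0) :
    (linearFactor d)⁻¹ = (((PowerSeries.X + PowerSeries.C d)⁻¹ : K⟦X⟧) : K⸨X⸩) := by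
  refine inv_eq_of_mul_eq_one_right ?_
  rw [linearFactor, ← PowerSeries.coe_mul, PowerSeries.mul_inv_cancel _ (by simpa),
    PowerSeries.coe_one]

lemma coeff_mul_inv_linearFactor_zero_pow (f : K⟦X⟧) (n : ℕ) :
    ((f : K⸨X⸩) * (linearFactor (0 : K))⁻¹ ^ n).coeff 0 = PowerSeries.coeff n f := by
  rw [linearFactor_zero, HahnSeries.inv_single, inv_one, HahnSeries.single_pow, one_pow, mul_comm]
  have := HahnSeries.coeff_single_mul_add (r := (1 : K)) (x := (f : K⸨X⸩)) (a := n)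
    (b := n • (-1 : ℤ))
  simpa using this

variable [Fintype ι]

/-- The sum of the residues at the points `r m` of a function `F(t) ∏ₖ (t - r k)⁻ᵉᵏ`,
where `F` has a simple pole at every `r m`, with local expansion `(f m)(t - r m) / (t - r m)`. -/
noncomputable def residueSum (f : ι → K⟦X⟧) (r : ι → K) (e : ι → ℕ) : K :=
  ∑ m, ((f m : K⸨X⸩) * ∏ k, (linearFactor (r m - r k))⁻¹ ^ e k).coeff 0

lemma prod_pow_add_single {M : Type*} [CommMonoid M] (u : ι → M) (e : ι → ℕ) (i : ι) (n : ℕ) :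
    ∏ k, u k ^ (e + Pi.single i n : ι → ℕ) k = (∏ k, u k ^ e k) * u i ^ n := by
  simp only [Pi.add_apply, pow_add, prod_mul_distrib, Pi.single_apply, pow_ite, pow_zero,
    prod_ite_eq', mem_univ, if_true]

lemma prod_pow_single {M : Type*} [CommMonoid M] (u : ι → M) (i : ι) (n : ℕ) :
    ∏ k, u k ^ (Pi.single i n : ι → ℕ) k = u i ^ n := by
  simpa using prod_pow_add_single u 0 i n

lemma residueSum_recursion (f : ι → K⟦X⟧) (r : ι → K) (e : ι → ℕ) (i j : ι) :
    (r i - r j) * residueSum f r (e + Pi.single i 1 + Pi.single j 1) =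
      residueSum f r (e + Pi.single i 1) - residueSum f r (e + Pi.single j 1) := by
  simp only [residueSum, mul_sum, ← sum_sub_distrib]
  refine sum_congr rfl fun m _ => ?_
  rw [← HahnSeries.coeff_sub, ← smul_eq_mul, ← HahnSeries.coeff_smul, ← HahnSeries.C_mul_eq_smul,
    ← sub_sub_sub_cancel_left _ _ (r m), ← linearFactor_sub]
  congr 1
  simp only [prod_pow_add_single, pow_one]
  field_simp [linearFactor_ne_zero]

lemma residueSum_eq_sum_coeff (f : ι → K⟦X⟧) {r : ι → K} (hr : Function.Injective r)
    (e : ι → ℕ) :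
    residueSum f r e = ∑ m, PowerSeries.coeff (e m)
      (f m * ∏ k with k ≠ m, (PowerSeries.X + PowerSeries.C (r m - r k))⁻¹ ^ e k) := by
  refine sum_congr rfl fun m _ => ?_
  rw [← coeff_mul_inv_linearFactor_zero_pow, ← prod_erase_mul _ _ (mem_univ m), sub_self,
    PowerSeries.coe_mul, mul_assoc, filter_ne' univ m]
  simp only [map_prod, map_pow]
  congr 3
  refine prod_congr rfl fun k hk => ?_
  rw [inv_linearFactor (sub_ne_zero.mpr (hr.ne (ne_of_mem_erase hk).symm))]

lemma residueSum_single (f : ι → K⟦X⟧) {r : ι → K} (hr : Function.Injective r) (i : ι) (n : ℕ) :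
    residueSum f r (Pi.single i n) = PowerSeries.coeff n (f i) +
      ∑ m ∈ univ.erase i, PowerSeries.constantCoeff (f m) * (r m - r i)⁻¹ ^ n := by
  rw [residueSum_eq_sum_coeff f hr, ← add_sum_erase _ _ (mem_univ i)]
  congr 1
  · rw [prod_eq_one fun k hk => ?_]
    · simp
    · simp [(mem_filter.mp hk).2]
  · refine sum_congr rfl fun m hm => ?_
    rw [Pi.single_eq_of_ne (ne_of_mem_erase hm), PowerSeries.coeff_zero_eq_constantCoeff_apply,
      map_mul, map_prod, prod_eq_single_of_mem i (by simpa using (ne_of_mem_erase hm).symm)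
        fun k _ hk => by simp [hk]]
    simp

/-- Partial fractions: a function of the exponents satisfying the recursion of `∏ₖ (t - r k)⁻ᵉᵏ` is
determined by its values at the exponents supported at a single pole. -/
lemma eq_residueSum_of_recursion {r : ι → K} (hr : Function.Injective r) {F : (ι → ℕ) → K}
    (hF : ∀ (e : ι → ℕ) (i j : ι), (r i - r j) * F (e + Pi.single i 1 + Pi.single j 1) =
      F (e + Pi.single i 1) - F (e + Pi.single j 1))
    {e : ι → ℕ} (he : e ≠ 0) :
    F e = residueSum
      (fun i => PowerSeries.mk fun n => if n = 0 then 0 else F (Pi.single i n)) r e := by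
  refine exponent_induction (P := fun e => F e = residueSum _ r e) (fun i n => ?_)
    (fun e i j hij hi hj => mul_left_cancel₀ (sub_ne_zero.mpr (hr.ne hij)) ?_) he
  · simp [residueSum_single _ hr]
  · rw [hF, hi, hj, residueSum_recursion]

end Residues

section PowerSeriesExpansions

variable {K : Type*} [Field K]

lemma coeff_inv_X_add_C_pow {d : K} (hd : d ≠ 0) (n k : ℕ) :
    PowerSeries.coeff k ((PowerSeries.X + PowerSeries.C d)⁻¹ ^ (n + 1)) =
      (-1) ^ k * (n + k).choose n * d⁻¹ ^ (n + 1 + k) := by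
  have key : (PowerSeries.X + PowerSeries.C d)⁻¹ ^ (n + 1) = PowerSeries.C (d⁻¹ ^ (n + 1)) *
      PowerSeries.rescale (-d⁻¹) (PowerSeries.mk fun k => ((n + k).choose n : K)) := by
    have hne : (PowerSeries.X + PowerSeries.C d) ^ (n + 1) ≠ (0 : K⟦X⟧) := by
      refine pow_ne_zero _ fun h => hd ?_
      simpa using congrArg PowerSeries.constantCoeff h
    have hfac : PowerSeries.X + PowerSeries.C d =
        PowerSeries.C d * PowerSeries.rescale (-d⁻¹) (1 - PowerSeries.X) := by
      rw [map_sub, map_one, PowerSeries.rescale_X, mul_sub, ← mul_assoc, ← map_mul]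
      simp [hd, add_comm]
    refine mul_left_cancel₀ hne ?_
    rw [← mul_pow, PowerSeries.mul_inv_cancel _ (by simpa), one_pow, hfac, mul_pow, ← map_pow,
      ← map_pow, mul_mul_mul_comm, ← map_mul, ← map_mul, ← mul_pow, mul_inv_cancel₀ hd,
      mul_comm _ (PowerSeries.mk _), PowerSeries.mk_add_choose_mul_one_sub_pow_eq_one]
    simp
  rw [key, PowerSeries.coeff_C_mul, PowerSeries.coeff_rescale, PowerSeries.coeff_mk]
  ring

/-- The double sum `Σⱼ Λⱼ Σ_ω C(ω+a-1,ω) C(p+c-j-ω-1,c-1) g(a+ω, p+c-j-ω)` produced by the residue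
at a pole of order `p` when poles of orders `a` and `c` lie elsewhere. -/
def outerSum (Λ : ℕ → K) (p a c : ℕ) (g : ℕ → ℕ → K) : K :=
  ∑ j ∈ range (p + 1), Λ j * ∑ ω ∈ range (p - j + 1),
    ((ω + a - 1).choose ω : K) * ((p + c - j - ω - 1).choose (c - 1) : K) *
      g (a + ω) (p + c - j - ω)

/-- The double sum `Σⱼ Λⱼ Σ_ω C(ω+a-j,ω) C(p+c-2-ω,c-1) g(a-j+ω+1, p+c-1-ω)` produced by the residue
at a pole of order `a` when a further partial fraction decomposition separates the other two
poles, of orders `p` and `c`. -/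
def innerSum (Λ : ℕ → K) (p a c : ℕ) (g : ℕ → ℕ → K) : K :=
  ∑ j ∈ range (a + 1), Λ j * ∑ ω ∈ range p,
    ((ω + a - j).choose ω : K) * ((p + c - 2 - ω).choose (c - 1) : K) *
      g (a - j + ω + 1) (p + c - 1 - ω)

lemma coeff_mul_inv_mul_inv {d d' : K} (hd : d ≠ 0) (hd' : d' ≠ 0) (Λ : ℕ → K) (p : ℕ) {a c : ℕ}
    (ha : 0 < a) (hc : 0 < c) :
    PowerSeries.coeff p (PowerSeries.mk Λ *
      ((PowerSeries.X + PowerSeries.C d)⁻¹ ^ a * (PowerSeries.X + PowerSeries.C d')⁻¹ ^ c)) =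
      (-1) ^ p * outerSum (fun j => (-1) ^ j * Λ j) p a c fun i k => d⁻¹ ^ i * d'⁻¹ ^ k := by
  obtain ⟨a, rfl⟩ := Nat.exists_eq_succ_of_ne_zero ha.ne'
  obtain ⟨c, rfl⟩ := Nat.exists_eq_succ_of_ne_zero hc.ne'
  simp only [PowerSeries.coeff_mul, coeff_inv_X_add_C_pow hd, coeff_inv_X_add_C_pow hd',
    Nat.sum_antidiagonal_eq_sum_range_succ_mk, PowerSeries.coeff_mk, outerSum, mul_sum,
    Nat.succ_eq_add_one]
  refine sum_congr rfl fun j hj => sum_congr rfl fun ω hω => ?_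
  obtain ⟨k, rfl⟩ := Nat.exists_eq_add_of_le (mem_range_succ_iff.mp hj)
  obtain ⟨i, rfl⟩ : ∃ i, k = ω + i := Nat.exists_eq_add_of_le (by grind)
  have hchoose : (ω + (a + 1) - 1).choose ω = (a + ω).choose a := by
    rw [Nat.choose_symm_add, ← add_assoc, Nat.add_sub_cancel, add_comm]
  have hsign : (-1 : K) ^ (j + (ω + i)) * (-1) ^ j = (-1) ^ ω * (-1) ^ i := by
    rw [mul_comm, ← pow_add, ← add_assoc, ← two_mul, pow_add, pow_mul, neg_one_sq, one_pow, one_mul,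
      pow_add]
  rw [hchoose, show j + (ω + i) + (c + 1) - j - ω - 1 = c + i by omega, Nat.add_sub_cancel,
    show j + (ω + i) + (c + 1) - j - ω = c + 1 + i by omega,
    show j + (ω + i) - j - ω = i by omega]
  linear_combination -Λ j * (a + ω).choose a * (c + i).choose c * d⁻¹ ^ (a + 1 + ω) *
    d'⁻¹ ^ (c + 1 + i) * hsign

lemma outerSum_neg_one_pow (Λ : ℕ → K) (p a c : ℕ) (g : ℕ → ℕ → K) :
    outerSum Λ p a c (fun i k => (-1) ^ (i + k) * g i k) =
      (-1) ^ (p + a + c) * outerSum (fun j => (-1) ^ j * Λ j) p a c g := by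
  simp only [outerSum, mul_sum]
  refine sum_congr rfl fun j hj => sum_congr rfl fun ω hω => ?_
  have hsign : (-1 : K) ^ (a + ω + (p + c - j - ω)) = (-1) ^ (p + a + c) * (-1) ^ j := by
    rw [← pow_add]
    exact neg_one_pow_congr (by grind)
  rw [hsign]
  ring

lemma coeff_mul_inv_mul_inv_neg {d d' : K} (hd : d ≠ 0) (hd' : d' ≠ 0) (Λ : ℕ → K) (p : ℕ)
    {a c : ℕ} (ha : 0 < a) (hc : 0 < c) :
    PowerSeries.coeff p (PowerSeries.mk Λ *
      ((PowerSeries.X + PowerSeries.C (-d))⁻¹ ^ a * (PowerSeries.X + PowerSeries.C (-d'))⁻¹ ^ c)) =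
      (-1) ^ (a + c) * outerSum Λ p a c fun i k => d⁻¹ ^ i * d'⁻¹ ^ k := by
  have hsq : ∀ j, (-1 : K) ^ j * (-1) ^ j = 1 := fun j => by rw [← mul_pow]; simp
  rw [coeff_mul_inv_mul_inv (neg_ne_zero.mpr hd) (neg_ne_zero.mpr hd') Λ p ha hc]
  have := outerSum_neg_one_pow (fun j => (-1) ^ j * Λ j) p a c fun i k => d⁻¹ ^ i * d'⁻¹ ^ k
  simp only [← mul_assoc, hsq, one_mul] at this
  have hsgn : ∀ i k : ℕ, (-d)⁻¹ ^ i * (-d')⁻¹ ^ k = (-1) ^ (i + k) * d⁻¹ ^ i * d'⁻¹ ^ k :=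
    fun i k => by rw [inv_neg, inv_neg, neg_pow d⁻¹, neg_pow d'⁻¹, pow_add]; ring
  simp only [hsgn, this]
  rw [add_assoc, pow_add _ p, ← mul_assoc, ← mul_assoc, hsq, one_mul]

lemma coeff_mk_mul_inv_pow {d : K} (hd : d ≠ 0) {Γ : ℕ → K} (hΓ : Γ 0 = 0) (p : ℕ) {c : ℕ}
    (hc : 0 < c) :
    PowerSeries.coeff p (PowerSeries.mk Γ * (PowerSeries.X + PowerSeries.C d)⁻¹ ^ c) =
      ∑ ω ∈ range p, Γ (ω + 1) * ((-1) ^ (p + ω + 1) * ((p + c - 2 - ω).choose (c - 1) : K) *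
        d⁻¹ ^ (p + c - 1 - ω)) := by
  obtain ⟨c, rfl⟩ := Nat.exists_eq_succ_of_ne_zero hc.ne'
  simp only [PowerSeries.coeff_mul, PowerSeries.coeff_mk, Nat.succ_eq_add_one,
    coeff_inv_X_add_C_pow hd, Nat.sum_antidiagonal_eq_sum_range_succ_mk]
  rw [sum_range_succ', hΓ, zero_mul, add_zero]
  refine sum_congr rfl fun ω hω => ?_
  obtain ⟨i, rfl⟩ := Nat.exists_eq_add_of_lt (mem_range.mp hω)
  rw [show ω + i + 1 + (c + 1) - 2 - ω = c + i by omega, show ω + i + 1 - (ω + 1) = i by omega,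
    show ω + i + 1 + (c + 1) - 1 - ω = c + 1 + i by omega, Nat.add_sub_cancel,
    neg_one_pow_congr (m := ω + i + 1 + ω + 1) (n := i) (by grind)]

/-- Partial fractions for the Taylor coefficients of `∏ₘ (t - r m)⁻ᵉᵐ` at a point other than the
poles. -/
lemma coeff_prod_inv_eq_residueSum {ι : Type*} [Fintype ι] {r : ι → K}
    (hr : Function.Injective r) (hr0 : ∀ m, r m ≠ 0) {e : ι → ℕ} (he : e ≠ 0) (k : ℕ) :
    PowerSeries.coeff k (∏ m, (PowerSeries.X + PowerSeries.C (-r m))⁻¹ ^ e m) =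
      residueSum (fun i => PowerSeries.mk fun n => if n = 0 then 0 else
        PowerSeries.coeff k ((PowerSeries.X + PowerSeries.C (-r i))⁻¹ ^ n)) r e := by
  classical
  set u : ι → K⟦X⟧ := fun m => (PowerSeries.X + PowerSeries.C (-r m))⁻¹
  have hu : ∀ m, (PowerSeries.X + PowerSeries.C (-r m)) * u m = 1 := fun m =>
    PowerSeries.mul_inv_cancel _ (by simpa using hr0 m)
  have hsub : ∀ i j, PowerSeries.C (r i - r j) * (u i * u j) = u i - u j := fun i j => by
    have hi := hu i
    have hj := hu j
    rw [map_neg] at hi hj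
    rw [map_sub]
    linear_combination u i * hj - u j * hi
  convert eq_residueSum_of_recursion (F := fun e => PowerSeries.coeff k (∏ m, u m ^ e m)) hr
    (fun e i j => ?_) he using 6
  · rw [prod_pow_single]
  · simp only [prod_pow_add_single, pow_one, ← map_sub, ← mul_sub, ← PowerSeries.coeff_C_mul,
      ← hsub]
    congr 1
    ring

lemma coeff_inv_sub_mul_inv_add {M N : K} (hM : M ≠ 0) (hN : N ≠ 0) (hMN : M + N ≠ 0) (k : ℕ)
    {p c : ℕ} (hp : 0 < p) (hc : 0 < c) :
    PowerSeries.coeff k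
      ((PowerSeries.X + PowerSeries.C (-M))⁻¹ ^ p * (PowerSeries.X + PowerSeries.C N)⁻¹ ^ c) =
      (-1) ^ p * ∑ ω ∈ range p, ((ω + k).choose ω : K) * ((p + c - 2 - ω).choose (c - 1) : K) *
        (M⁻¹ ^ (k + ω + 1) * (M + N)⁻¹ ^ (p + c - 1 - ω)) +
      (-1) ^ (p + k) * ∑ ω ∈ range c,
        ((ω + k).choose ω : K) * ((c + p - 2 - ω).choose (p - 1) : K) *
          (N⁻¹ ^ (k + ω + 1) * (M + N)⁻¹ ^ (c + p - 1 - ω)) := by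
  have hne : M ≠ -N := fun h => hMN (by rw [h, neg_add_cancel])
  have hr : Function.Injective ![M, -N] := by
    intro i j
    fin_cases i <;> fin_cases j <;> simp [hne, hne.symm]
  have hpf := coeff_prod_inv_eq_residueSum hr (by intro m; fin_cases m <;> simpa)
    (e := ![p, c]) (by simp [hp.ne']) k
  rw [residueSum_eq_sum_coeff _ hr] at hpf
  simp only [prod_filter, Fin.sum_univ_two, Fin.prod_univ_two, Matrix.cons_val_zero,
    Matrix.cons_val_one, neg_neg, ne_eq, not_true, if_false, one_mul, mul_one, sub_neg_eq_add,
    one_ne_zero, zero_ne_one, not_false_eq_true, if_true, show -N - M = -(M + N) by ring] at hpf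
  rw [hpf, coeff_mk_mul_inv_pow hMN (by simp) p hc,
    coeff_mk_mul_inv_pow (neg_ne_zero.mpr hMN) (by simp) c hp]
  simp only [mul_sum, Nat.succ_ne_zero, if_false]
  congr 1 <;> refine sum_congr rfl fun ω hω => ?_
  · have hsign : (-1 : K) ^ k * (-1) ^ (ω + 1 + k) * (-1) ^ (p + ω + 1) = (-1) ^ p := by
      simp only [← pow_add]
      exact neg_one_pow_congr (by grind)
    rw [coeff_inv_X_add_C_pow (neg_ne_zero.mpr hM), ← hsign, inv_neg, neg_pow M⁻¹]
    ring
  · have hsign : (-1 : K) ^ k * (-1) ^ (c + ω + 1) * (-1) ^ (c + p - 1 - ω) = (-1) ^ (p + k) := by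
      simp only [← pow_add]
      exact neg_one_pow_congr (by grind)
    rw [coeff_inv_X_add_C_pow hN, ← hsign, inv_neg, neg_pow (M + N)⁻¹]
    ring

lemma coeff_mul_inv_sub_mul_inv_add {M N : K} (hM : M ≠ 0) (hN : N ≠ 0) (hMN : M + N ≠ 0)
    (Λ : ℕ → K) (a : ℕ) {p c : ℕ} (hp : 0 < p) (hc : 0 < c) :
    PowerSeries.coeff a (PowerSeries.mk Λ *
      ((PowerSeries.X + PowerSeries.C (-M))⁻¹ ^ p * (PowerSeries.X + PowerSeries.C N)⁻¹ ^ c)) =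
      (-1) ^ p * innerSum Λ p a c (fun i k => M⁻¹ ^ i * (M + N)⁻¹ ^ k) +
      (-1) ^ (p + a) * innerSum (fun j => (-1) ^ j * Λ j) c a p
        (fun i k => N⁻¹ ^ i * (M + N)⁻¹ ^ k) := by
  simp only [PowerSeries.coeff_mul, PowerSeries.coeff_mk, Nat.sum_antidiagonal_eq_sum_range_succ_mk,
    coeff_inv_sub_mul_inv_add hM hN hMN _ hp hc, innerSum, mul_sum (range (a + 1)),
    ← sum_add_distrib]
  refine sum_congr rfl fun j hj => ?_
  have hja := mem_range_succ_iff.mp hj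
  have hsign : (-1 : K) ^ (p + (a - j)) = (-1) ^ (p + a) * (-1) ^ j := by
    rw [← pow_add]
    exact neg_one_pow_congr (by grind)
  simp only [hsign, Nat.add_sub_assoc hja]
  ring

end PowerSeriesExpansions

section SymmetricSums

variable {E : Type*} [AddCommGroup E] [TopologicalSpace E] {f : ℤ → E} {a : E}

lemma hasSum_symmetricIcc_iff_range (hf : f 0 = 0) : HasSum f a (symmetricIcc ℤ) ↔
    Tendsto (fun N => ∑ k ∈ range N, (f (k + 1) + f (-(k + 1)))) atTop (𝓝 a) := by
  rw [hasSum_symmetricIcc_iff]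
  refine tendsto_congr fun N => ?_
  induction N with
  | zero => simp [hf]
  | succ N ih => rw [Nat.cast_succ, sum_Icc_succ_eq_add_endpoints, ih, sum_range_succ, add_comm]

lemma hasSum_symmetricIcc_comp_neg (hf : HasSum f a (symmetricIcc ℤ)) :
    HasSum (fun l => f (-l)) a (symmetricIcc ℤ) := by
  rw [hasSum_symmetricIcc_iff] at hf ⊢
  refine hf.congr fun N => (sum_equiv (Equiv.neg ℤ) (fun l => ?_) fun l _ => ?_)
  · simp only [mem_Icc, Equiv.neg_apply]
    omega
  · simp

variable [IsTopologicalAddGroup E]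

lemma hasSum_symmetricIcc_comp_add_one (hf : HasSum f a (symmetricIcc ℤ))
    (hf0 : Tendsto f cofinite (𝓝 0)) : HasSum (fun l => f (l + 1)) a (symmetricIcc ℤ) := by
  rw [hasSum_symmetricIcc_iff] at hf ⊢
  rw [Int.cofinite_eq, tendsto_sup] at hf0
  have htop : Tendsto (fun N : ℕ => f (N + 1)) atTop (𝓝 0) :=
    hf0.2.comp (tendsto_atTop_add_const_right _ _ tendsto_natCast_atTop_atTop)
  have hbot : Tendsto (fun N : ℕ => f (-N)) atTop (𝓝 0) :=
    hf0.1.comp (tendsto_neg_atTop_atBot.comp tendsto_natCast_atTop_atTop)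
  have htelescope : ∀ N : ℕ, ∑ l ∈ Icc (-(N : ℤ)) N, f (l + 1) =
      ∑ l ∈ Icc (-(N : ℤ)) N, f l + f (N + 1) - f (-N) := fun N => by
    induction N with
    | zero => simp
    | succ N ih =>
      rw [Nat.cast_succ, sum_Icc_succ_eq_add_endpoints, sum_Icc_succ_eq_add_endpoints, ih,
        show -((N : ℤ) + 1) + 1 = -N by ring]
      abel
  simp only [htelescope]
  simpa using (hf.add htop).sub hbot

lemma hasSum_symmetricIcc_comp_add_natCast (hf : HasSum f a (symmetricIcc ℤ))
    (hf0 : Tendsto f cofinite (𝓝 0)) (n : ℕ) :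
    HasSum (fun l => f (l + n)) a (symmetricIcc ℤ) := by
  induction n with
  | zero => simpa using hf
  | succ n ih =>
    simpa [add_assoc, add_comm (1 : ℤ)] using hasSum_symmetricIcc_comp_add_one ih
      (hf0.comp (add_left_injective (n : ℤ)).tendsto_cofinite)

lemma hasSum_symmetricIcc_comp_add (hf : HasSum f a (symmetricIcc ℤ))
    (hf0 : Tendsto f cofinite (𝓝 0)) (n : ℤ) :
    HasSum (fun l => f (l + n)) a (symmetricIcc ℤ) := by
  obtain ⟨n, rfl | rfl⟩ := n.eq_nat_or_neg
  · exact hasSum_symmetricIcc_comp_add_natCast hf hf0 n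
  · simpa [add_comm] using hasSum_symmetricIcc_comp_neg <|
      hasSum_symmetricIcc_comp_add_natCast (hasSum_symmetricIcc_comp_neg hf)
        (hf0.comp neg_injective.tendsto_cofinite) n

end SymmetricSums

/-- The sequence `Λ` collects the Taylor coefficients of `t · ∑ₗ xˡ / (l - t)` at `t = 0`, the sum
over `l` being symmetric: apart from `Λ₀ = -1`, which stems from `l = 0`, these are the sums of
`xˡ / lʲ` over `l ≠ 0`. -/
structure IsLerchSequence (x : ℂ) (Λ : ℕ → ℂ) : Prop where
  norm_eq_one : ‖x‖ = 1
  zero : Λ 0 = -1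
  hasSum : ∀ j ≠ 0, HasSum (fun l : ℤ => x ^ l * (l : ℂ)⁻¹ ^ j) (Λ j) (symmetricIcc ℤ)

namespace IsLerchSequence

variable {x : ℂ} {Λ : ℕ → ℂ}

lemma ne_zero (hΛ : IsLerchSequence x Λ) : x ≠ 0 :=
  norm_ne_zero_iff.mp (by simp [hΛ.norm_eq_one])

lemma norm_zpow_eq_one (hΛ : IsLerchSequence x Λ) (l : ℤ) : ‖x ^ l‖ = 1 := by
  rw [norm_zpow, hΛ.norm_eq_one, one_zpow]

lemma inv (hΛ : IsLerchSequence x Λ) : IsLerchSequence x⁻¹ fun j => (-1) ^ j * Λ j where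
  norm_eq_one := by rw [norm_inv, hΛ.norm_eq_one, inv_one]
  zero := by simp [hΛ.zero]
  hasSum j hj := by
    convert! (hasSum_symmetricIcc_comp_neg (hΛ.hasSum j hj)).mul_left ((-1) ^ j) using 2 with l
    rw [inv_zpow', Int.cast_neg, inv_neg, neg_pow (_⁻¹), mul_left_comm, ← mul_assoc ((-1) ^ j),
      ← mul_pow]
    simp

lemma hasSum_sub (hΛ : IsLerchSequence x Λ) (r : ℤ) {j : ℕ} (hj : j ≠ 0) :
    HasSum (fun l : ℤ => x ^ l * ((l : ℂ) - r)⁻¹ ^ j) (x ^ r * Λ j) (symmetricIcc ℤ) := by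
  have hlim : Tendsto (fun l : ℤ => x ^ l * (l : ℂ)⁻¹ ^ j) cofinite (𝓝 0) := by
    rw [tendsto_zero_iff_norm_tendsto_zero]
    have : Tendsto (fun l : ℤ => ‖l‖⁻¹ ^ j) cofinite (𝓝 (0 ^ j)) := by
      refine Tendsto.pow (tendsto_inv_atTop_zero.comp ?_) j
      simpa using tendsto_norm_cocompact_atTop (E := ℤ)
    simpa [hΛ.norm_zpow_eq_one, hj, ← Int.norm_eq_abs] using this
  convert! (hasSum_symmetricIcc_comp_add (hΛ.hasSum j hj) hlim (-r)).mul_left (x ^ r) using 2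
    with l
  rw [← mul_assoc, ← zpow_add₀ hΛ.ne_zero, add_neg_cancel_comm_assoc]
  push_cast
  ring

/-- Partial fractions, applied to a symmetric sum from which the poles are left out. -/
theorem hasSum_residueSum {ι : Type*} [Fintype ι] (hΛ : IsLerchSequence x Λ)
    {r : ι → ℤ} (hr : Function.Injective r) {e : ι → ℕ} (he : e ≠ 0) :
    HasSum ((Set.range r)ᶜ.indicator fun l : ℤ => x ^ l * ∏ i, ((l : ℂ) - r i)⁻¹ ^ e i)
      (residueSum (fun i => PowerSeries.C (x ^ r i) * PowerSeries.mk Λ) (fun i => (r i : ℂ)) e)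
      (symmetricIcc ℤ) := by
  classical
  have hrC : Function.Injective fun i => (r i : ℂ) := Int.cast_injective.comp hr
  refine exponent_induction (P := fun e => HasSum ((Set.range r)ᶜ.indicator fun l : ℤ =>
    x ^ l * ∏ i, ((l : ℂ) - r i)⁻¹ ^ e i) (residueSum _ _ e) (symmetricIcc ℤ))
    (fun i n => ?_) (fun e i j hij hi hj => ?_) he
  · have hpoles : HasSum
        ((Set.range r).indicator fun l : ℤ => x ^ l * ((l : ℂ) - r i)⁻¹ ^ (n + 1))
        (∑ m ∈ univ.erase i, x ^ r m * ((r m : ℂ) - r i)⁻¹ ^ (n + 1)) (symmetricIcc ℤ) := by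
      have hoff : ∀ l ∉ univ.image r,
          (Set.range r).indicator (fun l : ℤ => x ^ l * ((l : ℂ) - r i)⁻¹ ^ (n + 1)) l = 0 :=
        fun l hl => Set.indicator_of_notMem (by simpa using hl) _
      have := hasSum_sum_of_ne_finset_zero (L := symmetricIcc ℤ) hoff
      rw [sum_image hr.injOn] at this
      rw [sum_erase _ (by simp)]
      simpa only [Set.indicator_of_mem (Set.mem_range_self _)] using this
    convert! (hΛ.hasSum_sub (r i) n.succ_ne_zero).sub hpoles using 1
    · simp only [prod_pow_single, Set.indicator_compl]
      rfl
    · rw [residueSum_single _ hrC]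
      simp [hΛ.zero, sub_eq_add_neg]
  · have hne : (r i : ℂ) - r j ≠ 0 := sub_ne_zero.mpr (hrC.ne hij)
    convert! (hi.sub hj).mul_left ((r i : ℂ) - r j)⁻¹ using 1
    · funext l
      by_cases hl : l ∈ (Set.range r)ᶜ
      · have hl' : ∀ k, (l : ℂ) - r k ≠ 0 := fun k h =>
          hl ⟨k, by exact_mod_cast (sub_eq_zero.mp h).symm⟩
        have := hl' i
        have := hl' j
        simp only [Set.indicator_of_mem hl, prod_pow_add_single, pow_one]
        field_simp
        ring
      · simp [hl]
    · rw [← residueSum_recursion, inv_mul_cancel_left₀ hne]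

theorem tsum_eq_residueSum {ι : Type*} [Fintype ι] [Nonempty ι] (hΛ : IsLerchSequence x Λ)
    {r : ι → ℤ} (hr : Function.Injective r) {e : ι → ℕ}
    (he : ∀ i, e i ≠ 0) (hs : Summable fun l : ℤ => x ^ l * ∏ i, ((l : ℂ) - r i)⁻¹ ^ e i) :
    ∑' l : ℤ, x ^ l * ∏ i, ((l : ℂ) - r i)⁻¹ ^ e i =
      residueSum (fun i => PowerSeries.C (x ^ r i) * PowerSeries.mk Λ) (fun i => (r i : ℂ)) e := by
  have he0 : e ≠ 0 := fun h => he (Classical.arbitrary ι) (congrFun h _)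
  refine HasSum.unique (L := symmetricIcc ℤ) (hs.hasSum.mono_left (symmetricIcc ℤ).le_atTop)
    ((hΛ.hasSum_residueSum hr he0).congr_fun fun l => ?_)
  symm
  rw [Set.indicator_apply_eq_self]
  intro hl
  obtain ⟨i, rfl⟩ := not_not.mp hl
  rw [prod_eq_zero (mem_univ i) (by simp [he i]), mul_zero]

end IsLerchSequence

section LValues

lemma chi4_two_mul_add_one (i : ℕ) : chi4 ((2 * i + 1 : ℕ) : ZMod 4) = (-1) ^ i := by
  rw [chi4, MulChar.ringHomComp_apply, ZMod.χ₄_eq_neg_one_pow (by omega),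
    show (2 * i + 1) / 2 = i by omega]
  simp

lemma chi4_two_mul (i : ℕ) : chi4 ((2 * i : ℕ) : ZMod 4) = 0 := by
  rw [chi4, MulChar.ringHomComp_apply, ZMod.χ₄_nat_eq_if_mod_four, if_pos (by omega), map_zero]

lemma chi4_ne_one : chi4 ≠ 1 := fun h => by
  have h3 := chi4_two_mul_add_one 1
  rw [h, MulChar.one_apply (by decide)] at h3
  norm_num at h3

lemma hasSum_Lchi4 {s : ℂ} (hs : 1 < s.re) :
    HasSum (fun i : ℕ => (-1 : ℂ) ^ i * ((2 * i + 1 : ℕ) : ℂ) ^ (-s)) (Lchi4 s) := by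
  have hL : HasSum (LSeries.term (fun n => chi4 n) s) (Lchi4 s) := by
    rw [Lchi4, DirichletCharacter.LFunction_eq_LSeries _ hs]
    exact (DirichletCharacter.LSeriesSummable_of_one_lt_re chi4 hs).hasSum
  have hinj : Function.Injective fun i : ℕ => 2 * i + 1 := fun _ _ h => by simpa using h
  refine ((hinj.hasSum_iff fun n hn => ?_).mpr hL).congr_fun fun i => ?_
  · obtain ⟨k, rfl | rfl⟩ := n.even_or_odd'
    · rw [LSeries.term_def, chi4_two_mul, zero_div, ite_self]
    · exact absurd ⟨k, rfl⟩ hn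
  · rw [Function.comp_apply, LSeries.term_of_ne_zero (by omega), chi4_two_mul_add_one,
      Complex.cpow_neg, div_eq_mul_inv]

/-- The alternating series bound for `σ > 1` survives the passage to the limit `σ → 1`. -/
lemma norm_Lchi4_sub_sum_le {σ : ℝ} (hσ : 1 ≤ σ) (N : ℕ) :
    ‖Lchi4 σ - ∑ i ∈ range N, (-1 : ℂ) ^ i * ((2 * i + 1 : ℕ) : ℂ) ^ (-(σ : ℂ))‖ ≤
      ((2 * N + 1 : ℕ) : ℝ) ^ (-σ) := by
  have hcont : Continuous Lchi4 :=
    (DirichletCharacter.differentiable_LFunction chi4_ne_one).continuous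
  have hpow (i : ℕ) : Continuous fun σ : ℝ => ((2 * i + 1 : ℕ) : ℂ) ^ (-(σ : ℂ)) :=
    continuous_ofReal.neg.const_cpow (.inl (Nat.cast_ne_zero.mpr (by omega)))
  have hclosed : IsClosed {σ : ℝ |
      ‖Lchi4 σ - ∑ i ∈ range N, (-1 : ℂ) ^ i * ((2 * i + 1 : ℕ) : ℂ) ^ (-(σ : ℂ))‖ ≤
        ((2 * N + 1 : ℕ) : ℝ) ^ (-σ)} :=
    isClosed_le ((hcont.comp continuous_ofReal).sub <| continuous_finsetSum _ fun i _ =>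
      continuous_const.mul (hpow i)).norm
      (continuous_const.rpow continuous_neg fun _ => .inl (by positivity))
  refine hclosed.closure_subset_iff.mpr (fun σ (hσ : 1 < σ) => ?_) (closure_Ioi (1 : ℝ) ▸ hσ)
  set f : ℕ → ℝ := fun i => ((2 * i + 1 : ℕ) : ℝ) ^ (-σ) with hf
  have hfC (i : ℕ) : ((2 * i + 1 : ℕ) : ℂ) ^ (-(σ : ℂ)) = f i := by
    rw [hf, ofReal_cpow (by positivity)]; norm_cast
  have hfa : Antitone f := fun i j hij =>
    Real.rpow_le_rpow_of_nonpos (by positivity) (by gcongr) (by linarith)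
  have hfs : Summable f := (Real.summable_nat_rpow.mpr (by linarith)).comp_injective
    (i := fun i : ℕ => 2 * i + 1) fun _ _ h => by simpa using h
  have hL : Lchi4 σ = ((∑' i, (-1) ^ i * f i : ℝ) : ℂ) := by
    rw [← (hasSum_Lchi4 (s := σ) hσ).tsum_eq]
    simp only [hfC]
    push_cast
    rfl
  have := alternating_series_error_bound f hfa hfs N
  rw [← Real.norm_eq_abs, ← norm_real, ofReal_sub, ← hL] at this
  simp only [Set.mem_ofPred_eq, hfC]
  exact_mod_cast this

lemma tendsto_sum_Lchi4 {j : ℕ} (hj : j ≠ 0) :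
    Tendsto (fun N => ∑ i ∈ range N, (-1 : ℂ) ^ i * (2 * (i : ℂ) + 1)⁻¹ ^ j) atTop
      (𝓝 (Lchi4 j)) := by
  have hj1 : (1 : ℝ) ≤ j := by exact_mod_cast Nat.one_le_iff_ne_zero.mpr hj
  have hlim : Tendsto (fun N : ℕ => ((2 * N + 1 : ℕ) : ℝ) ^ (-(j : ℝ))) atTop (𝓝 0) := by
    refine (tendsto_rpow_neg_atTop (by linarith)).comp (tendsto_natCast_atTop_atTop.comp ?_)
    exact tendsto_atTop_mono (fun N => (by omega : N ≤ 2 * N + 1)) tendsto_id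
  rw [tendsto_iff_norm_sub_tendsto_zero]
  refine squeeze_zero (fun _ => norm_nonneg _) (fun N => ?_) hlim
  simpa [norm_sub_rev, Complex.cpow_neg] using norm_Lchi4_sub_sum_le hj1 N

lemma hasSum_riemannZeta {j : ℕ} (hj : 1 < j) :
    HasSum (fun k : ℕ => ((k : ℂ) + 1)⁻¹ ^ j) (riemannZeta j) := by
  have hs : Summable fun k : ℕ => 1 / (k : ℂ) ^ (j : ℂ) :=
    Complex.summable_one_div_nat_cpow.mpr (by simpa using hj)
  rw [zeta_eq_tsum_one_div_nat_add_one_cpow (by simpa using hj)]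
  simpa using ((summable_nat_add_iff 1).mpr hs).hasSum

lemma phi_natCast {j : ℕ} (hj : j ≠ 1) : phi j = (2 * 2⁻¹ ^ j - 1) * riemannZeta j := by
  rw [phi, if_neg (by exact_mod_cast hj), Complex.cpow_sub _ _ two_ne_zero, Complex.cpow_natCast,
    Complex.cpow_one, div_eq_mul_inv, inv_pow]

lemma hasSum_phi {j : ℕ} (hj : 1 < j) :
    HasSum (fun k : ℕ => (-1 : ℂ) ^ (k + 1) * ((k : ℂ) + 1)⁻¹ ^ j) (phi j) := by
  have hζ := hasSum_riemannZeta hj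
  have hodd : HasSum (fun k : ℕ => if Even k then (0 : ℂ) else ((k : ℂ) + 1)⁻¹ ^ j)
      (0 + 2⁻¹ ^ j * riemannZeta j) := by
    refine HasSum.even_add_odd (by simp [hasSum_zero])
      ((hζ.mul_left (2⁻¹ ^ j)).congr_fun fun k => ?_)
    rw [if_neg (by simp), ← mul_pow, ← mul_inv]
    push_cast
    ring
  rw [phi_natCast hj.ne', show (2 * 2⁻¹ ^ j - 1) * riemannZeta j =
    2 * (0 + 2⁻¹ ^ j * riemannZeta j) - riemannZeta j by ring]
  refine ((hodd.mul_left 2).sub hζ).congr_fun fun k => ?_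
  split_ifs with hk
  · rw [hk.add_one.neg_one_pow]
    ring
  · rw [(Nat.not_even_iff_odd.mp hk).add_one.neg_one_pow]
    ring

end LValues

section LerchSequences

lemma hasSum_zpow_mul_inv_pow_iff {x a : ℂ} {j : ℕ} (hj : j ≠ 0) :
    HasSum (fun l : ℤ => x ^ l * (l : ℂ)⁻¹ ^ j) a (symmetricIcc ℤ) ↔
      Tendsto (fun N => ∑ k ∈ range N,
        (x ^ (k + 1) + (-1) ^ j * x⁻¹ ^ (k + 1)) * ((k : ℂ) + 1)⁻¹ ^ j) atTop (𝓝 a) := by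
  rw [hasSum_symmetricIcc_iff_range (by simp [hj])]
  refine tendsto_congr fun N => sum_congr rfl fun k _ => ?_
  rw [← inv_zpow', ← Nat.cast_succ, zpow_natCast, zpow_natCast, Nat.succ_eq_add_one]
  push_cast
  rw [inv_neg, neg_pow ((k : ℂ) + 1)⁻¹]
  ring

/-- The sequence `2 Z₀, 0, 2 Z₂, 0, 2 Z₄, …`. -/
def doubledEvenPart (Z : ℕ → ℂ) (j : ℕ) : ℂ := if Even j then 2 * Z j else 0

lemma isLerchSequence_doubledEvenPart {x : ℂ} (hx : x ^ 2 = 1) {Z : ℕ → ℂ} (hZ0 : Z 0 = -1 / 2)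
    (hZ : ∀ j, 1 < j → HasSum (fun k : ℕ => x ^ (k + 1) * ((k : ℂ) + 1)⁻¹ ^ j) (Z j)) :
    IsLerchSequence x (doubledEvenPart Z) where
  norm_eq_one := Complex.norm_eq_one_of_pow_eq_one hx two_ne_zero
  zero := by rw [doubledEvenPart, if_pos Even.zero, hZ0]; norm_num
  hasSum j hj := by
    have hinv : x⁻¹ = x := inv_eq_of_mul_eq_one_right (by rw [← sq, hx])
    rw [hasSum_zpow_mul_inv_pow_iff hj, hinv, doubledEvenPart]
    split_ifs with hEven
    · have hj1 : 1 < j := by grind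
      refine ((hZ j hj1).mul_left 2).tendsto_sum_nat.congr fun N => sum_congr rfl fun k _ => ?_
      rw [hEven.neg_one_pow]
      ring
    · simp [(Nat.not_even_iff_odd.mp hEven).neg_one_pow]

lemma isLerchSequence_one : IsLerchSequence 1 (doubledEvenPart fun j => riemannZeta j) :=
  isLerchSequence_doubledEvenPart (one_pow 2) (by simp [riemannZeta_zero])
    fun j hj => by simpa using hasSum_riemannZeta hj

lemma isLerchSequence_neg_one : IsLerchSequence (-1) (doubledEvenPart fun j => phi j) :=
  isLerchSequence_doubledEvenPart neg_one_sq
    (by rw [phi_natCast zero_ne_one, Nat.cast_zero, riemannZeta_zero]; norm_num)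
    fun _ => hasSum_phi

lemma I_pow_add_neg_one_pow_mul_inv_I_pow (n j : ℕ) :
    I ^ n + (-1) ^ j * I⁻¹ ^ n = (1 + (-1) ^ (j + n)) * I ^ n := by
  rw [inv_I, neg_pow I n, pow_add]
  ring

lemma LamI_of_even {j : ℕ} (hj : Even j) : LamI j = 2 * 2⁻¹ ^ j * phi j := by
  rw [LamI, if_pos hj, phi_natCast (by grind), zpow_sub₀ two_ne_zero, zpow_natCast, zpow_one,
    div_eq_mul_inv, inv_pow, mul_assoc]

lemma hasSum_LamI_of_even {j : ℕ} (hj : Even j) (hj0 : j ≠ 0) :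
    HasSum (fun l : ℤ => I ^ l * (l : ℂ)⁻¹ ^ j) (LamI j) (symmetricIcc ℤ) := by
  have hsum : HasSum (fun k : ℕ => (1 + (-1) ^ (j + (k + 1))) * I ^ (k + 1) * ((k : ℂ) + 1)⁻¹ ^ j)
      (0 + 2 * 2⁻¹ ^ j * phi j) := by
    refine HasSum.even_add_odd ?_ (((hasSum_phi (by grind)).mul_left _).congr_fun fun k => ?_)
    · simp [pow_add, pow_mul, hj.neg_one_pow, hasSum_zero]
    · rw [show 2 * k + 1 + 1 = 2 * (k + 1) by ring, pow_add, pow_mul, pow_mul, hj.neg_one_pow,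
        neg_one_sq, one_pow, I_sq, show ((2 * k + 1 : ℕ) : ℂ) + 1 = 2 * (k + 1) by push_cast; ring,
        mul_inv, mul_pow]
      ring
  rw [hasSum_zpow_mul_inv_pow_iff hj0, LamI_of_even hj, ← zero_add (2 * _ * _)]
  simpa only [I_pow_add_neg_one_pow_mul_inv_I_pow] using hsum.tendsto_sum_nat

lemma sum_range_eq_sum_even {M : Type*} [AddCommMonoid M] {f : ℕ → M}
    (hf : ∀ i, f (2 * i + 1) = 0) (N : ℕ) :
    ∑ k ∈ range N, f k = ∑ i ∈ range ((N + 1) / 2), f (2 * i) := by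
  induction N with
  | zero => simp
  | succ N ih =>
    rw [sum_range_succ, ih]
    obtain ⟨k, rfl | rfl⟩ := N.even_or_odd'
    · rw [show (2 * k + 1 + 1) / 2 = k + 1 by omega, show (2 * k + 1) / 2 = k by omega,
        sum_range_succ]
    · rw [show (2 * k + 1 + 1 + 1) / 2 = (2 * k + 1 + 1) / 2 by omega, hf, add_zero]

lemma hasSum_LamI_of_odd {j : ℕ} (hj : Odd j) :
    HasSum (fun l : ℤ => I ^ l * (l : ℂ)⁻¹ ^ j) (LamI j) (symmetricIcc ℤ) := by
  have hj0 : j ≠ 0 := hj.pos.ne'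
  have hhalf : Tendsto (fun N : ℕ => (N + 1) / 2) atTop atTop :=
    tendsto_atTop_atTop.mpr fun b => ⟨2 * b, fun a ha => by omega⟩
  rw [hasSum_zpow_mul_inv_pow_iff hj0, LamI, if_neg (Nat.not_even_iff_odd.mpr hj)]
  simp only [I_pow_add_neg_one_pow_mul_inv_I_pow]
  refine (((tendsto_sum_Lchi4 hj0).comp hhalf).const_mul (2 * I)).congr fun N => ?_
  rw [sum_range_eq_sum_even fun i => by simp [pow_add, pow_mul, hj.neg_one_pow],
    Function.comp_apply, mul_sum]
  refine sum_congr rfl fun i _ => ?_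
  rw [pow_add, pow_succ _ (2 * i), pow_succ _ (2 * i), pow_mul, pow_mul, hj.neg_one_pow,
    neg_one_sq, one_pow, I_sq]
  push_cast
  ring

lemma isLerchSequence_I : IsLerchSequence I LamI where
  norm_eq_one := norm_I
  zero := by
    rw [LamI_of_even Even.zero, phi_natCast zero_ne_one, Nat.cast_zero, riemannZeta_zero]
    norm_num
  hasSum j hj := j.even_or_odd.elim (hasSum_LamI_of_even · hj) hasSum_LamI_of_odd

lemma LamNegI_eq_neg_one_pow_mul (j : ℕ) : LamNegI j = (-1) ^ j * LamI j := by
  rw [LamNegI, LamI]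
  split_ifs with hj
  · rw [hj.neg_one_pow, one_mul]
  · rw [(Nat.not_even_iff_odd.mp hj).neg_one_pow, neg_one_mul]

lemma isLerchSequence_neg_I : IsLerchSequence (-I) LamNegI := by
  simpa only [inv_I, ← LamNegI_eq_neg_one_pow_mul] using isLerchSequence_I.inv

end LerchSequences

section Summability

lemma norm_inv_intCast_pow_le_one (k : ℤ) (p : ℕ) : ‖(k : ℂ)⁻¹ ^ p‖ ≤ 1 := by
  rw [norm_pow, norm_inv]
  refine pow_le_one₀ (by positivity) ?_
  rcases eq_or_ne k 0 with rfl | hk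
  · simp
  · exact inv_le_one_of_one_le₀ (by simpa using mod_cast Int.one_le_abs hk)

lemma norm_inv_intCast_pow_mul_le {p a : ℕ} (hp : 0 < p) (ha : 0 < a) (k l : ℤ) :
    ‖(k : ℂ)⁻¹ ^ p * (l : ℂ)⁻¹ ^ a‖ ≤ 1 / (k : ℝ) ^ 2 + 1 / (l : ℝ) ^ 2 := by
  have hle : ∀ (k : ℤ) {p : ℕ}, 0 < p → ‖(k : ℂ)⁻¹ ^ p‖ ≤ |(k : ℝ)|⁻¹ := fun k p hp => by
    obtain ⟨p, rfl⟩ := Nat.exists_eq_succ_of_ne_zero hp.ne'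
    rw [pow_succ, norm_mul]
    simpa using mul_le_mul_of_nonneg_right (norm_inv_intCast_pow_le_one k p) (norm_nonneg (k : ℂ)⁻¹)
  calc ‖(k : ℂ)⁻¹ ^ p * (l : ℂ)⁻¹ ^ a‖ ≤ |(k : ℝ)|⁻¹ * |(l : ℝ)|⁻¹ := by
        rw [norm_mul]
        gcongr
        exacts [hle k hp, hle l ha]
    _ ≤ |(k : ℝ)|⁻¹ ^ 2 + |(l : ℝ)|⁻¹ ^ 2 := by
        nlinarith [sq_nonneg (|(k : ℝ)|⁻¹ - |(l : ℝ)|⁻¹), sq_nonneg |(k : ℝ)|⁻¹,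
          sq_nonneg |(l : ℝ)|⁻¹]
    _ = 1 / (k : ℝ) ^ 2 + 1 / (l : ℝ) ^ 2 := by simp

lemma summable_norm_natCast_cpow_neg {s : ℂ} (hs : 1 < s.re) :
    Summable fun n : ℕ => ‖(n : ℂ) ^ (-s)‖ := by
  have hne : (-s).re ≠ 0 := by rw [neg_re]; linarith
  simp only [norm_natCast_cpow_of_re_ne_zero _ hne]
  exact Real.summable_nat_rpow.mpr (by rw [neg_re]; linarith)

lemma summable_add_comp_shear_mul {G β : Type*} [AddGroup G] {f : G → ℝ} {g : β → ℝ}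
    (hf : Summable f) (hg : Summable g) (φ : β → G) :
    Summable fun t : G × β => (f t.1 + f (t.1 + φ t.2)) * g t.2 := by
  have hmul : Summable fun t : G × β => f t.1 * g t.2 :=
    summable_mul_of_summable_norm hf.norm hg.norm
  have hshear : Function.Injective fun t : G × β => (t.1 + φ t.2, t.2) := by
    rintro ⟨x, b⟩ ⟨y, b'⟩ h
    obtain ⟨h, rfl⟩ := Prod.mk.inj h
    exact Prod.ext (add_right_cancel h) rfl
  simpa only [add_mul, Function.comp_def] using hmul.add (hmul.comp_injective hshear)

/-- The summand `x^M y^N M⁻ᵖ N⁻ˢ (M + N)⁻ᑫ` of `T(p,s,q;x,y)`, as a function on `ℤ × ℕ`. It vanishes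
on the lines `M = 0`, `N = 0`, `M + N = 0` because `0⁻¹ = 0` and `0 ^ (-s) = 0`. -/
noncomputable def tTerm (t : ℤ × ℕ) (p : ℕ) (s : ℂ) (q : ℕ) (x y : ℂ) : ℂ :=
  x ^ t.1 * y ^ t.2 *
    ((t.1 : ℂ)⁻¹ ^ p * ((t.1 + t.2 : ℤ) : ℂ)⁻¹ ^ q) * (t.2 : ℂ) ^ (-s)

lemma summable_tTerm {p q : ℕ} (hp : 0 < p) (hq : 0 < q) {s : ℂ} (hs : 1 < s.re) {x y : ℂ}
    (hx : ‖x‖ = 1) (hy : ‖y‖ = 1) : Summable fun t => tTerm t p s q x y := by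
  refine .of_norm_bounded (summable_add_comp_shear_mul
    (Real.summable_one_div_int_pow.mpr one_lt_two) (summable_norm_natCast_cpow_neg hs)
    fun N : ℕ => (N : ℤ)) fun t => ?_
  rw [tTerm, norm_mul, norm_mul (_ * _), norm_mul (x ^ _), norm_zpow, norm_pow, hx, hy, one_zpow,
    one_pow, one_mul, one_mul]
  exact mul_le_mul_of_nonneg_right (norm_inv_intCast_pow_mul_le hp hq _ _) (norm_nonneg _)

lemma hasSum_T {p q : ℕ} (hp : 0 < p) (hq : 0 < q) {s : ℂ} (hs : 1 < s.re) {x y : ℂ}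
    (hx : ‖x‖ = 1) (hy : ‖y‖ = 1) : HasSum (fun t => tTerm t p s q x y) (T p s q x y) := by
  have hs0 : -s ≠ 0 := by rintro h; simp [neg_eq_zero.mp h] at hs; linarith
  have hinj : Function.Injective fun t : ℤ × ℕ => (t.1, t.2 + 1) := fun t t' h => by
    simpa [Prod.ext_iff] using h
  have hsupp : ∀ t ∉ Set.range fun t : ℤ × ℕ => (t.1, t.2 + 1), tTerm t p s q x y = 0 := by
    rintro ⟨M, _ | N⟩ ht
    · simp [tTerm, hs0]
    · exact absurd ⟨(M, N), rfl⟩ ht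
  convert! (summable_tTerm hp hq hs hx hy).hasSum using 1
  rw [T, ← hinj.tsum_eq (Function.support_subset_iff'.mpr hsupp)]
  refine tsum_congr fun t => ?_
  simp only [tTerm, Nat.cast_succ, Complex.cpow_neg]
  split_ifs with h
  · push_cast
    ring
  · rw [not_and_or, not_not, not_not] at h
    rcases h with h | h <;> simp [h, hp.ne', hq.ne']

/-- The summand `w(L + 2M + 3N) L⁻ᵖ M⁻ᑫ N⁻ˢ (L + M)⁻ᵃ (M + N)⁻ᵇ (L + M + N)⁻ᶜ` on the coweight
lattice of type `A₃`, with `w` a weight on the classes modulo the coroot lattice. It vanishes on the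
walls of the Weyl chambers because `0⁻¹ = 0` and `0 ^ (-s) = 0`. -/
noncomputable def latticeTerm (w : ℤ → ℂ) (p q a b c : ℕ) (s : ℂ) (t : ℤ × ℤ × ℕ) : ℂ :=
  w (t.1 + 2 * t.2.1 + 3 * t.2.2) *
    ((t.1 : ℂ)⁻¹ ^ p * ((t.1 + t.2.1 : ℤ) : ℂ)⁻¹ ^ a * ((t.1 + t.2.1 + t.2.2 : ℤ) : ℂ)⁻¹ ^ c) *
    ((t.2.1 : ℂ)⁻¹ ^ q * ((t.2.1 + t.2.2 : ℤ) : ℂ)⁻¹ ^ b * (t.2.2 : ℂ) ^ (-s))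

lemma summable_latticeTerm {w : ℤ → ℂ} (hw : ∀ k, ‖w k‖ ≤ 1) {p q a b c : ℕ} (hp : 0 < p)
    (hq : 0 < q) (ha : 0 < a) (hb : 0 < b) {s : ℂ} (hs : 1 < s.re) :
    Summable (latticeTerm w p q a b c s) := by
  have hsq := Real.summable_one_div_int_pow.mpr one_lt_two
  have hMN := summable_add_comp_shear_mul hsq (summable_norm_natCast_cpow_neg hs)
    fun N : ℕ => (N : ℤ)
  refine .of_norm_bounded (summable_add_comp_shear_mul hsq hMN Prod.fst) fun t => ?_
  rw [latticeTerm, norm_mul, norm_mul (w _), norm_mul (_ * _ ^ a), norm_mul (_ * _ ^ b)]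
  have hMN_le := norm_inv_intCast_pow_mul_le hq hb t.2.1 (t.2.1 + t.2.2)
  have hL_le := norm_inv_intCast_pow_mul_le hp ha t.1 (t.1 + t.2.1)
  refine mul_le_mul ?_ (mul_le_mul_of_nonneg_right hMN_le (norm_nonneg _)) (by positivity)
    (by positivity)
  calc _ ≤ 1 * (‖(t.1 : ℂ)⁻¹ ^ p * ((t.1 + t.2.1 : ℤ) : ℂ)⁻¹ ^ a‖ * 1) := by
        gcongr
        exacts [hw _, norm_inv_intCast_pow_le_one _ _]
    _ ≤ _ := by rwa [one_mul, mul_one]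

end Summability

section InnerSummation

lemma residueSum_three_poles {K : Type*} [Field K] {M N : K} (hM : M ≠ 0) (hN : N ≠ 0)
    (hMN : M + N ≠ 0) (y : Fin 3 → K) (Λ : ℕ → K) {p a c : ℕ} (hp : 0 < p) (ha : 0 < a)
    (hc : 0 < c) :
    residueSum (fun i => PowerSeries.C (y i) * PowerSeries.mk Λ) ![0, -M, -(M + N)] ![p, a, c] =
      y 0 * ((-1) ^ p * outerSum (fun j => (-1) ^ j * Λ j) p a c
        fun i k => M⁻¹ ^ i * (M + N)⁻¹ ^ k) +
      y 2 * ((-1) ^ (p + a) * outerSum Λ c a p fun i k => N⁻¹ ^ i * (M + N)⁻¹ ^ k) +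
      y 1 * ((-1) ^ p * innerSum Λ p a c (fun i k => M⁻¹ ^ i * (M + N)⁻¹ ^ k) +
        (-1) ^ (p + a) * innerSum (fun j => (-1) ^ j * Λ j) c a p
          fun i k => N⁻¹ ^ i * (M + N)⁻¹ ^ k) := by
  have hne : M ≠ -N := fun h => hMN (by rw [h, neg_add_cancel])
  have hr : Function.Injective ![0, -M, -(M + N)] := by
    intro i j
    fin_cases i <;> fin_cases j <;> simp [hM, hN, add_eq_zero_iff_eq_neg, eq_comm, hne]
  rw [residueSum_eq_sum_coeff _ hr]
  simp only [prod_filter, Fin.sum_univ_three, Fin.prod_univ_three, Matrix.cons_val, mul_assoc,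
    PowerSeries.coeff_C_mul, Fin.reduceEq, ne_eq, not_true, not_false_eq_true, if_true, if_false,
    one_mul, mul_one, zero_sub, sub_zero, neg_neg, neg_sub_neg, add_sub_cancel_left,
    show M - (M + N) = -N by ring]
  rw [coeff_mul_inv_mul_inv hM hMN Λ p ha hc, coeff_mul_inv_sub_mul_inv_add hM hN hMN Λ a hp hc,
    mul_comm (_ ^ p) (_ ^ a), coeff_mul_inv_mul_inv_neg hN hMN Λ c ha hp, add_comm a p]
  exact add_right_comm _ _ _

theorem IsLerchSequence.tsum_three_poles {x : ℂ} {Λ : ℕ → ℂ} (hΛ : IsLerchSequence x Λ)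
    {p a c : ℕ} (hp : 0 < p) (ha : 0 < a) (hc : 0 < c) {M N : ℤ} (hM : M ≠ 0) (hN : N ≠ 0)
    (hMN : M + N ≠ 0)
    (hs : Summable fun l : ℤ =>
      x ^ l * ((l : ℂ)⁻¹ ^ p * ((l + M : ℤ) : ℂ)⁻¹ ^ a * ((l + M + N : ℤ) : ℂ)⁻¹ ^ c)) :
    ∑' l : ℤ, x ^ l * ((l : ℂ)⁻¹ ^ p * ((l + M : ℤ) : ℂ)⁻¹ ^ a * ((l + M + N : ℤ) : ℂ)⁻¹ ^ c) =
      (-1) ^ p * outerSum (fun j => (-1) ^ j * Λ j) p a c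
        (fun i k => (M : ℂ)⁻¹ ^ i * ((M + N : ℤ) : ℂ)⁻¹ ^ k) +
      x ^ (-(M + N)) * ((-1) ^ (p + a) * outerSum Λ c a p
        (fun i k => (N : ℂ)⁻¹ ^ i * ((M + N : ℤ) : ℂ)⁻¹ ^ k)) +
      x ^ (-M) * ((-1) ^ p * innerSum Λ p a c
        (fun i k => (M : ℂ)⁻¹ ^ i * ((M + N : ℤ) : ℂ)⁻¹ ^ k) +
      (-1) ^ (p + a) * innerSum (fun j => (-1) ^ j * Λ j) c a p
        (fun i k => (N : ℂ)⁻¹ ^ i * ((M + N : ℤ) : ℂ)⁻¹ ^ k)) := by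
  have hr : Function.Injective ![0, -M, -(M + N)] := by
    intro i j
    fin_cases i <;> fin_cases j <;> simp <;> omega
  have hcast : (fun i => ((![0, -M, -(M + N)] i : ℤ) : ℂ)) = ![0, -(M : ℂ), -(M + N : ℂ)] := by
    funext i
    fin_cases i <;> simp [add_comm]
  have hprod : ∀ l : ℤ, ∏ i, ((l : ℂ) - (![0, -M, -(M + N)] i : ℤ))⁻¹ ^ ![p, a, c] i =
      (l : ℂ)⁻¹ ^ p * ((l + M : ℤ) : ℂ)⁻¹ ^ a * ((l + M + N : ℤ) : ℂ)⁻¹ ^ c := fun l => by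
    simp only [Fin.prod_univ_three, Matrix.cons_val, sub_zero, ← Int.cast_sub,
      sub_neg_eq_add, ← add_assoc]
  have hres := hΛ.tsum_eq_residueSum hr (e := ![p, a, c])
    (by intro i; fin_cases i <;> simp [hp.ne', ha.ne', hc.ne']) (by simpa only [hprod] using hs)
  rw [hcast, residueSum_three_poles (mod_cast hM) (mod_cast hN) (mod_cast hMN) _ Λ hp ha hc] at hres
  simpa only [hprod, Matrix.cons_val, zpow_zero, one_mul, ← Int.cast_add] using hres

lemma outerSum_const_mul {K : Type*} [Field K] (Λ : ℕ → K) (p a c : ℕ) (κ : K) (g : ℕ → ℕ → K) :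
    outerSum Λ p a c (fun i k => κ * g i k) = κ * outerSum Λ p a c g := by
  simp only [outerSum, mul_sum, mul_left_comm κ]

lemma innerSum_const_mul {K : Type*} [Field K] (Λ : ℕ → K) (p a c : ℕ) (κ : K) (g : ℕ → ℕ → K) :
    innerSum Λ p a c (fun i k => κ * g i k) = κ * innerSum Λ p a c g := by
  simp only [innerSum, mul_sum, mul_left_comm κ]

section HasSum

variable {K β : Type*} [Field K] [TopologicalSpace K] [IsTopologicalRing K]
  {g : β → ℕ → ℕ → K} {g' : ℕ → ℕ → K}

lemma hasSum_outerSum (Λ : ℕ → K) (p a c : ℕ) (hg : ∀ i k, HasSum (g · i k) (g' i k)) :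
    HasSum (fun t => outerSum Λ p a c (g t)) (outerSum Λ p a c g') :=
  hasSum_sum fun _ _ => (hasSum_sum fun _ _ => (hg _ _).mul_left _).mul_left _

lemma hasSum_innerSum (Λ : ℕ → K) (p a c : ℕ) (hg : ∀ i k, HasSum (g · i k) (g' i k)) :
    HasSum (fun t => innerSum Λ p a c (g t)) (innerSum Λ p a c g') :=
  hasSum_sum fun _ _ => (hasSum_sum fun _ _ => (hg _ _).mul_left _).mul_left _

end HasSum

/-- The common shape of `J₀`, …, `J₃`, for the Lerch sequence `Λ` of `x`: these are obtained for
`τ = T` and `x = 1, -i, -1, i`. The function `τ` is a parameter so that `T` can be replaced by its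
summand. -/
noncomputable def twistedJ (Λ : ℕ → ℂ) (x : ℂ) (p q a b c : ℕ) (s : ℂ)
    (τ : ℕ → ℂ → ℕ → ℂ → ℂ → ℂ) : ℂ :=
  (-1) ^ p * outerSum (fun j => (-1) ^ j * Λ j) p a c
    (fun i k => τ (q + i) s (b + k) (x ^ 2) (x ^ 3)) +
  (-1) ^ (p + a) * outerSum Λ c a p (fun i k => τ q (s + i) (b + k) x (x ^ 2)) +
  (-1) ^ p * innerSum Λ p a c (fun i k => τ (q + i) s (b + k) x (x ^ 3)) +
  (-1) ^ (p + a) * innerSum (fun j => (-1) ^ j * Λ j) c a p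
    (fun i k => τ q (s + i) (b + k) x (x ^ 3))

lemma hasSum_twistedJ {x : ℂ} (hx : ‖x‖ = 1) (Λ : ℕ → ℂ) (p a c : ℕ) {q b : ℕ} (hq : 0 < q)
    (hb : 0 < b) {s : ℂ} (hs : 1 < s.re) :
    HasSum (fun t => twistedJ Λ x p q a b c s (tTerm t)) (twistedJ Λ x p q a b c s T) := by
  have hpow : ∀ n : ℕ, ‖x ^ n‖ = 1 := fun n => by rw [norm_pow, hx, one_pow]
  have hs' : ∀ i : ℕ, 1 < (s + i).re := fun i => by
    rw [add_re, natCast_re]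
    exact lt_add_of_lt_of_nonneg hs i.cast_nonneg
  refine (((HasSum.mul_left _ ?_).add (.mul_left _ ?_)).add (.mul_left _ ?_)).add (.mul_left _ ?_)
  · exact hasSum_outerSum _ _ _ _ fun i k =>
      hasSum_T (Nat.add_pos_left hq i) (Nat.add_pos_left hb k) hs (hpow 2) (hpow 3)
  · exact hasSum_outerSum _ _ _ _ fun i k =>
      hasSum_T hq (Nat.add_pos_left hb k) (hs' i) hx (hpow 2)
  · exact hasSum_innerSum _ _ _ _ fun i k =>
      hasSum_T (Nat.add_pos_left hq i) (Nat.add_pos_left hb k) hs hx (hpow 3)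
  · exact hasSum_innerSum _ _ _ _ fun i k =>
      hasSum_T hq (Nat.add_pos_left hb k) (hs' i) hx (hpow 3)

lemma tTerm_add_left (M : ℤ) (N p i : ℕ) (s : ℂ) (q k : ℕ) (x y : ℂ) :
    tTerm (M, N) (p + i) s (q + k) x y =
      tTerm (M, N) p s q x y * ((M : ℂ)⁻¹ ^ i * ((M + N : ℤ) : ℂ)⁻¹ ^ k) := by
  simp only [tTerm, pow_add]
  ring

lemma tTerm_add_right (M : ℤ) (N p i : ℕ) {s : ℂ} (hs : 0 < s.re) (q k : ℕ) (x y : ℂ) :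
    tTerm (M, N) p (s + i) (q + k) x y =
      tTerm (M, N) p s q x y * (((N : ℤ) : ℂ)⁻¹ ^ i * ((M + N : ℤ) : ℂ)⁻¹ ^ k) := by
  have hcpow : (N : ℂ) ^ (-(s + i)) = (N : ℂ) ^ (-s) * (N : ℂ)⁻¹ ^ i := by
    rcases eq_or_ne N 0 with rfl | hN
    · have hne : ∀ i : ℕ, -(s + i) ≠ 0 := fun i h => by
        have := congrArg re (neg_eq_zero.mp h)
        rw [add_re, natCast_re, zero_re] at this
        linarith [i.cast_nonneg (α := ℝ)]
      rw [Nat.cast_zero, zero_cpow (hne i), zero_cpow (by simpa using hne 0), zero_mul]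
    · rw [neg_add, cpow_add _ _ (mod_cast hN), cpow_neg _ (i : ℂ), cpow_natCast, inv_pow]
  simp only [tTerm, pow_add, hcpow, Int.cast_natCast]
  ring

lemma latticeTerm_zpow {x : ℂ} (hx : x ≠ 0) (p q a b c : ℕ) (s : ℂ) (L M : ℤ) (N : ℕ) :
    latticeTerm (x ^ ·) p q a b c s (L, M, N) = tTerm (M, N) q s b (x ^ 2) (x ^ 3) *
      (x ^ L * ((L : ℂ)⁻¹ ^ p * ((L + M : ℤ) : ℂ)⁻¹ ^ a * ((L + M + N : ℤ) : ℂ)⁻¹ ^ c)) := by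
  have hweight : x ^ (L + 2 * M + 3 * (N : ℤ)) = x ^ L * ((x ^ 2) ^ M * (x ^ 3) ^ N) := by
    rw [zpow_add₀ hx, zpow_add₀ hx, zpow_mul, zpow_mul, zpow_natCast, mul_assoc]
    norm_cast
  simp only [latticeTerm, tTerm, hweight]
  ring

lemma tTerm_sq_right {x : ℂ} (hx : x ≠ 0) (M : ℤ) (N p : ℕ) (s : ℂ) (q : ℕ) :
    tTerm (M, N) p s q x (x ^ 2) = x ^ (-(M + N : ℤ)) * tTerm (M, N) p s q (x ^ 2) (x ^ 3) := by
  have hweight : x ^ M * (x ^ 2) ^ N = x ^ (-(M + N : ℤ)) * ((x ^ 2) ^ M * (x ^ 3) ^ N) := by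
    simp only [← zpow_natCast, ← zpow_mul, ← zpow_add₀ hx]
    congr 1
    push_cast
    ring
  simp only [tTerm, hweight]
  ring

lemma tTerm_cube_right {x : ℂ} (hx : x ≠ 0) (M : ℤ) (N p : ℕ) (s : ℂ) (q : ℕ) :
    tTerm (M, N) p s q x (x ^ 3) = x ^ (-M) * tTerm (M, N) p s q (x ^ 2) (x ^ 3) := by
  have hweight : x ^ M * (x ^ 3) ^ N = x ^ (-M) * ((x ^ 2) ^ M * (x ^ 3) ^ N) := by
    simp only [← zpow_natCast, ← zpow_mul, ← zpow_add₀ hx]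
    congr 1
    push_cast
    ring
  simp only [tTerm, hweight]
  ring

variable {x : ℂ} {Λ : ℕ → ℂ} {p q a b c : ℕ} {s : ℂ}

lemma IsLerchSequence.tsum_latticeTerm_fiber (hΛ : IsLerchSequence x Λ) (hp : 0 < p) (hq : 0 < q)
    (ha : 0 < a) (hb : 0 < b) (hc : 0 < c) (hs : 1 < s.re) (t : ℤ × ℕ) :
    ∑' L : ℤ, latticeTerm (x ^ ·) p q a b c s (L, t) = twistedJ Λ x p q a b c s (tTerm t) := by
  obtain ⟨M, N⟩ := t
  have hx := hΛ.ne_zero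
  have hs0 : 0 < s.re := one_pos.trans hs
  simp only [latticeTerm_zpow hx, tsum_mul_left, twistedJ, tTerm_add_left,
    tTerm_add_right _ _ _ _ hs0, outerSum_const_mul, innerSum_const_mul, tTerm_sq_right hx,
    tTerm_cube_right hx]
  set κ := tTerm (M, N) q s b (x ^ 2) (x ^ 3) with hκ
  rcases eq_or_ne κ 0 with h0 | h0
  · simp [h0]
  have hM : M ≠ 0 := by rintro rfl; exact h0 (by simp [hκ, tTerm, hq.ne'])
  have hMN : M + N ≠ 0 := fun h => h0 (by simp [hκ, tTerm, h, hb.ne'])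
  have hN : (N : ℤ) ≠ 0 := fun h => h0 (by
    have hs' : s ≠ 0 := by rintro rfl; simp at hs0
    simp [hκ, tTerm, Int.natCast_eq_zero.mp h, hs'])
  have hsum : Summable fun L : ℤ =>
      x ^ L * ((L : ℂ)⁻¹ ^ p * ((L + M : ℤ) : ℂ)⁻¹ ^ a * ((L + M + N : ℤ) : ℂ)⁻¹ ^ c) := by
    rw [← summable_mul_left_iff h0]
    simpa only [Prod.swap_prod_mk, latticeTerm_zpow hx] using (summable_latticeTerm (c := c)
      (fun k => (hΛ.norm_zpow_eq_one k).le) hp hq ha hb hs).prod_symm.prod_factor (M, N)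
  rw [hΛ.tsum_three_poles hp ha hc hM hN hMN hsum]
  ring

theorem IsLerchSequence.hasSum_latticeTerm (hΛ : IsLerchSequence x Λ) (hp : 0 < p) (hq : 0 < q)
    (ha : 0 < a) (hb : 0 < b) (hc : 0 < c) (hs : 1 < s.re) :
    HasSum (latticeTerm (x ^ ·) p q a b c s) (twistedJ Λ x p q a b c s T) := by
  have hsum := summable_latticeTerm (c := c) (fun k => (hΛ.norm_zpow_eq_one k).le) hp hq ha hb hs
  convert! hsum.hasSum using 1
  rw [hsum.tsum_prod, ← Summable.tsum_comm (f := fun L t => latticeTerm _ p q a b c s (L, t)) hsum]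
  simp only [hΛ.tsum_latticeTerm_fiber hp hq ha hb hc hs]
  exact (hasSum_twistedJ hΛ.norm_eq_one Λ p a c hq hb hs).tsum_eq.symm

end InnerSummation

section RightHandSides

lemma neg_one_pow_mul_doubledEvenPart (Z : ℕ → ℂ) (j : ℕ) :
    (-1) ^ j * doubledEvenPart Z j = doubledEvenPart Z j := by
  rw [doubledEvenPart]
  split_ifs with hj
  · rw [hj.neg_one_pow, one_mul]
  · rw [mul_zero]

lemma sum_range_doubledEvenPart_mul (Z F : ℕ → ℂ) (n : ℕ) :
    ∑ j ∈ range (n + 1), doubledEvenPart Z j * F j =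
      2 * ∑ j ∈ range (n / 2 + 1), Z (2 * j) * F (2 * j) := by
  simp only [doubledEvenPart, ite_mul, zero_mul]
  rw [← sum_filter, mul_sum]
  refine (sum_nbij' (· / 2) (2 * ·) ?_ ?_ ?_ ?_ ?_) <;> simp only [mem_filter, mem_range]
  · grind
  · grind
  · grind
  · grind
  · rintro j ⟨-, hj⟩
    rw [Nat.mul_div_cancel' hj.two_dvd, mul_assoc]

variable (p q a b c : ℕ) (s : ℂ)

lemma twistedJ_eq (Λ : ℕ → ℂ) (x : ℂ) (τ : ℕ → ℂ → ℕ → ℂ → ℂ → ℂ) :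
    twistedJ Λ x p q a b c s τ =
      (-1) ^ p * ∑ j ∈ range (p + 1), (-1) ^ j * Λ j * ∑ ω ∈ range (p - j + 1),
        ((ω + a - 1).choose ω : ℂ) * ((p + c - j - ω - 1).choose (c - 1) : ℂ) *
          τ (q + a + ω) s (p + b + c - j - ω) (x ^ 2) (x ^ 3) +
      (-1) ^ (p + a) * ∑ j ∈ range (c + 1), Λ j * ∑ ω ∈ range (c - j + 1),
        ((ω + a - 1).choose ω : ℂ) * ((p + c - j - ω - 1).choose (p - 1) : ℂ) *
          τ q (s + a + ω) (p + b + c - j - ω) x (x ^ 2) +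
      (-1) ^ p * ∑ j ∈ range (a + 1), Λ j * ∑ ω ∈ range p,
        ((ω + a - j).choose ω : ℂ) * ((p + c - 2 - ω).choose (c - 1) : ℂ) *
          τ (q + a - j + ω + 1) s (p + b + c - 1 - ω) x (x ^ 3) +
      (-1) ^ (p + a) * ∑ j ∈ range (a + 1), (-1) ^ j * Λ j * ∑ ω ∈ range c,
        ((ω + a - j).choose ω : ℂ) * ((p + c - 2 - ω).choose (p - 1) : ℂ) *
          τ q (s + ((a - j : ℕ) : ℂ) + ω + 1) (p + b + c - 1 - ω) x (x ^ 3) := by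
  simp only [twistedJ, outerSum, innerSum, add_comm c p]
  refine congrArg₂ _ (congrArg₂ _ (congrArg₂ _ ?_ ?_) ?_) ?_ <;>
    refine congrArg _ (sum_congr rfl fun j hj => congrArg _ (sum_congr rfl fun ω hω => ?_)) <;>
    rw [mem_range] at hj hω <;> congr 2
  exacts [by omega, by omega, by push_cast; ring, by omega, by omega, by omega,
    by push_cast; ring, by omega]

lemma twistedJ_doubledEvenPart (Z : ℕ → ℂ) (x : ℂ) (τ : ℕ → ℂ → ℕ → ℂ → ℂ → ℂ) :
    twistedJ (doubledEvenPart Z) x p q a b c s τ =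
      2 * (-1) ^ p * ∑ j ∈ range (p / 2 + 1), Z (2 * j) * ∑ ω ∈ range (p - 2 * j + 1),
        ((ω + a - 1).choose ω : ℂ) * ((p + c - 2 * j - ω - 1).choose (c - 1) : ℂ) *
          τ (q + a + ω) s (p + b + c - 2 * j - ω) (x ^ 2) (x ^ 3) +
      2 * (-1) ^ (p + a) * ∑ j ∈ range (c / 2 + 1), Z (2 * j) * ∑ ω ∈ range (c - 2 * j + 1),
        ((ω + a - 1).choose ω : ℂ) * ((p + c - 2 * j - ω - 1).choose (p - 1) : ℂ) *
          τ q (s + a + ω) (p + b + c - 2 * j - ω) x (x ^ 2) +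
      2 * (-1) ^ p * ∑ j ∈ range (a / 2 + 1), Z (2 * j) * ∑ ω ∈ range p,
        ((ω + a - 2 * j).choose ω : ℂ) * ((p + c - 2 - ω).choose (c - 1) : ℂ) *
          τ (q + a - 2 * j + ω + 1) s (p + b + c - 1 - ω) x (x ^ 3) +
      2 * (-1) ^ (p + a) * ∑ j ∈ range (a / 2 + 1), Z (2 * j) * ∑ ω ∈ range c,
        ((ω + a - 2 * j).choose ω : ℂ) * ((p + c - 2 - ω).choose (p - 1) : ℂ) *
          τ q (s + ((a - 2 * j : ℕ) : ℂ) + ω + 1) (p + b + c - 1 - ω) x (x ^ 3) := by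
  simp only [twistedJ_eq, neg_one_pow_mul_doubledEvenPart, sum_range_doubledEvenPart_mul,
    ← mul_assoc, mul_comm _ (2 : ℂ)]

lemma J0_eq_twistedJ :
    J0 p q a b c s = twistedJ (doubledEvenPart fun j => riemannZeta j) 1 p q a b c s T := by
  simp only [J0, twistedJ_doubledEvenPart, one_pow, Nat.cast_mul, Nat.cast_two]

lemma J2_eq_twistedJ :
    J2 p q a b c s = twistedJ (doubledEvenPart fun j => phi j) (-1) p q a b c s T := by
  simp only [J2, twistedJ_doubledEvenPart, neg_one_sq, show (-1 : ℂ) ^ 3 = -1 by norm_num,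
    Nat.cast_mul, Nat.cast_two]

lemma J1_eq_twistedJ : J1 p q a b c s = twistedJ LamNegI (-I) p q a b c s T := by
  simp only [J1, twistedJ_eq, neg_sq, I_sq, show (-I) ^ 3 = I by rw [neg_pow]; norm_num]

lemma J3_eq_twistedJ : J3 p q a b c s = twistedJ LamI I p q a b c s T := by
  simp only [J3, twistedJ_eq, I_sq, I_pow_three]

end RightHandSides

section Chambers

/-- The twelve Weyl chambers of the `A₃` coweight lattice on which `N > 0`, in the order of the
terms of `Scomb`: the point `(L, M, N)` whose image in the dominant chamber is `(l, m, n)`. -/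
def chamberPoint : Fin 12 → ℕ → ℕ → ℕ → ℤ × ℤ × ℕ
  | 0, l, m, n => (l, m, n)
  | 1, l, m, n => (-l, l + m, n)
  | 2, l, m, n => (-(l + m), l, m + n)
  | 3, l, m, n => (-(l + m + n), l, m)
  | 4, l, m, n => (l + m, -m, m + n)
  | 5, l, m, n => (l + m + n, -(m + n), m)
  | 6, l, m, n => (m, -(l + m), l + m + n)
  | 7, l, m, n => (m + n, -(l + m + n), l + m)
  | 8, l, m, n => (n, -(l + m + n), l)
  | 9, l, m, n => (-m, -l, l + m + n)
  | 10, l, m, n => (-(m + n), -l, l + m)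
  | 11, l, m, n => (-n, -(l + m), l)

lemma chamberPoint_injective : Function.Injective fun u : Fin 12 × ℕ × ℕ × ℕ =>
    chamberPoint u.1 (u.2.1 + 1) (u.2.2.1 + 1) (u.2.2.2 + 1) := by
  rintro ⟨i, l, m, n⟩ ⟨j, l', m', n'⟩ h
  fin_cases i <;> fin_cases j <;>
    simp only [chamberPoint, Prod.mk.injEq, Fin.zero_eta, Fin.mk_one, Fin.reduceFinMk, Fin.isValue,
      Fin.reduceEq, zero_ne_one, one_ne_zero, true_and, false_and] at h ⊢ <;>
    omega

lemma mem_range_chamberPoint {L M : ℤ} {N : ℕ} (hL : L ≠ 0) (hM : M ≠ 0) (hN : N ≠ 0)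
    (hLM : L + M ≠ 0) (hMN : M + N ≠ 0) (hLMN : L + M + N ≠ 0) :
    (L, M, N) ∈ Set.range fun u : Fin 12 × ℕ × ℕ × ℕ =>
      chamberPoint u.1 (u.2.1 + 1) (u.2.2.1 + 1) (u.2.2.2 + 1) := by
  suffices ∃ (i : Fin 12) (l m n : ℤ), 0 < l ∧ 0 < m ∧ 0 < n ∧
      chamberPoint i l.toNat m.toNat n.toNat = (L, M, N) by
    obtain ⟨i, l, m, n, hl, hm, hn, h⟩ := this
    refine ⟨(i, l.toNat - 1, m.toNat - 1, n.toNat - 1), ?_⟩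
    dsimp only
    rwa [Nat.sub_add_cancel (by omega), Nat.sub_add_cancel (by omega),
      Nat.sub_add_cancel (by omega)]
  rcases lt_or_gt_of_ne hL with hL | hL <;> rcases lt_or_gt_of_ne hM with hM | hM <;>
    rcases lt_or_gt_of_ne hLM with hLM | hLM <;> rcases lt_or_gt_of_ne hMN with hMN | hMN <;>
    rcases lt_or_gt_of_ne hLMN with hLMN | hLMN <;> try omega
  on_goal 1 => use 11, N, -(M + N), -L
  on_goal 2 => use 10, -M, M + N, -(L + M + N)
  on_goal 3 => use 9, -M, -L, L + M + N
  on_goal 4 => use 3, M, N, -(L + M + N)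
  on_goal 5 => use 2, M, -(L + M), L + M + N
  on_goal 6 => use 1, -L, L + M, N
  on_goal 7 => use 8, N, -(L + M + N), L
  on_goal 8 => use 7, -(L + M), L + M + N, -(M + N)
  on_goal 9 => use 6, -(L + M), L, M + N
  on_goal 10 => use 5, L + M, N, -(M + N)
  on_goal 11 => use 4, L + M, -M, M + N
  on_goal 12 => use 0, L, M, N
  all_goals
    simp only [chamberPoint, Prod.mk.injEq]
    omega

/-- The `(l, m, n)` term of the zeta-sum `Z3` for a weight that depends on `l + 2m + 3n` only. -/
noncomputable def z3Term (w : ℤ → ℂ) (l m n : ℕ) (s₁ s₂ s₃ s₄ s₅ s₆ : ℂ) : ℂ :=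
  w (l + 2 * m + 3 * n) /
    ((l : ℂ) ^ s₁ * (m : ℂ) ^ s₂ * (n : ℂ) ^ s₃ * ((l + m : ℕ) : ℂ) ^ s₄ *
      ((m + n : ℕ) : ℂ) ^ s₅ * ((l + m + n : ℕ) : ℂ) ^ s₆)

/-- The twelve signed terms of the alternating combination `Scomb Z`. -/
noncomputable def scombTerm (Z : ℂ → ℂ → ℂ → ℂ → ℂ → ℂ → ℂ) (p q a b c : ℕ) (s : ℂ) : Fin 12 → ℂ
  | 0 => Z p q s a b c
  | 1 => (-1) ^ p * Z p a s q c b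
  | 2 => (-1) ^ (p + a) * Z q a c p s b
  | 3 => (-1) ^ (p + a + c) * Z q s c b a p
  | 4 => (-1) ^ q * Z a q b p s c
  | 5 => (-1) ^ (q + b) * Z a s b c q p
  | 6 => (-1) ^ (q + a) * Z a p b q c s
  | 7 => (-1) ^ (q + a + b) * Z a c b s p q
  | 8 => (-1) ^ (q + a + b + c) * Z s c p a b q
  | 9 => (-1) ^ (p + q + a) * Z q p c a b s
  | 10 => (-1) ^ (p + q + a + c) * Z q b c s p a
  | 11 => (-1) ^ (p + q + a + b + c) * Z s b p q c a

lemma sum_scombTerm (Z : ℂ → ℂ → ℂ → ℂ → ℂ → ℂ → ℂ) (p q a b c : ℕ) (s : ℂ) :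
    ∑ i, scombTerm Z p q a b c s i = Scomb Z p q a b c s := by
  simp only [Fin.sum_univ_castSucc, Fin.sum_univ_zero, zero_add]
  rfl

lemma scombTerm_Z3 (w : ℤ → ℂ) (p q a b c : ℕ) (s : ℂ) (i : Fin 12) :
    scombTerm (Z3 fun l m n => w (l + 2 * m + 3 * n)) p q a b c s i =
      ∑' u : ℕ × ℕ × ℕ,
        scombTerm (z3Term w (u.1 + 1) (u.2.1 + 1) (u.2.2 + 1)) p q a b c s i := by
  fin_cases i <;> simp only [scombTerm, tsum_mul_left] <;> rfl

lemma inv_intCast_pow_eq {k : ℤ} {ε : ℤˣ} {x : ℕ} (h : k = ε * x) (e : ℕ) :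
    (k : ℂ)⁻¹ ^ e = ((ε : ℤ) : ℂ) ^ e * ((x : ℂ) ^ (e : ℂ))⁻¹ := by
  rcases Int.units_eq_one_or ε with rfl | rfl <;> simp [h, inv_neg, neg_pow (x : ℂ)⁻¹]

lemma latticeTerm_eq_of_roots {w : ℤ → ℂ} (hw : Function.Periodic w 4) {p q a b c : ℕ} {s : ℂ}
    {L M k : ℤ} {N : ℕ} (ε₁ ε₂ ε₄ ε₅ ε₆ : ℤˣ) (x₁ x₂ x₄ x₅ x₆ : ℕ)
    (h : 4 ∣ (L + 2 * M + 3 * N) - k ∧ L = ε₁ * x₁ ∧ M = ε₂ * x₂ ∧ L + M = ε₄ * x₄ ∧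
      M + N = ε₅ * x₅ ∧ L + M + N = ε₆ * x₆) :
    latticeTerm w p q a b c s (L, M, N) =
      (ε₁ : ℤ) ^ p * (ε₂ : ℤ) ^ q * (ε₄ : ℤ) ^ a * (ε₅ : ℤ) ^ b * (ε₆ : ℤ) ^ c *
        (w k / ((x₁ : ℂ) ^ (p : ℂ) * (x₂ : ℂ) ^ (q : ℂ) * (N : ℂ) ^ s * (x₄ : ℂ) ^ (a : ℂ) *
          (x₅ : ℂ) ^ (b : ℂ) * (x₆ : ℂ) ^ (c : ℂ))) := by
  obtain ⟨⟨d, hd⟩, h₁, h₂, h₄, h₅, h₆⟩ := h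
  have hwk : w (L + 2 * M + 3 * N) = w k := by
    rw [← hw.int_mul d k]
    congr 1
    push_cast
    linarith
  simp only [latticeTerm, hwk, inv_intCast_pow_eq h₁, inv_intCast_pow_eq h₂,
    inv_intCast_pow_eq h₄, inv_intCast_pow_eq h₅, inv_intCast_pow_eq h₆, cpow_neg, div_eq_mul_inv,
    mul_inv]
  ring

lemma latticeTerm_chamberPoint {w : ℤ → ℂ} (hw : Function.Periodic w 4) (p q a b c : ℕ) (s : ℂ)
    (i : Fin 12) (l m n : ℕ) :
    latticeTerm w p q a b c s (chamberPoint i l m n) =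
      scombTerm (z3Term w l m n) p q a b c s i := by
  have roots {L M : ℤ} {N : ℕ} := latticeTerm_eq_of_roots hw (p := p) (q := q) (a := a) (b := b)
    (c := c) (s := s) (L := L) (M := M) (N := N) (k := l + 2 * m + 3 * n)
  fin_cases i <;> simp only [chamberPoint, scombTerm, z3Term]
  -- The signs and absolute values of `L`, `M`, `L + M`, `M + N`, `L + M + N` in each chamber.
  on_goal 1 => rw [roots 1 1 1 1 1 l m (l + m) (m + n) (l + m + n) (by push_cast; omega)]
  on_goal 2 => rw [roots (-1) 1 1 1 1 l (l + m) m (l + m + n) (m + n) (by push_cast; omega)]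
  on_goal 3 => rw [roots (-1) 1 (-1) 1 1 (l + m) l m (l + m + n) n (by push_cast; omega)]
  on_goal 4 => rw [roots (-1) 1 (-1) 1 (-1) (l + m + n) l (m + n) (l + m) n (by push_cast; omega)]
  on_goal 5 => rw [roots 1 (-1) 1 1 1 (l + m) m l n (l + m + n) (by push_cast; omega)]
  on_goal 6 => rw [roots 1 (-1) 1 (-1) 1 (l + m + n) (m + n) l n (l + m) (by push_cast; omega)]
  on_goal 7 => rw [roots 1 (-1) (-1) 1 1 m (l + m) l n (m + n) (by push_cast; omega)]
  on_goal 8 => rw [roots 1 (-1) (-1) (-1) 1 (m + n) (l + m + n) l n m (by push_cast; omega)]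
  on_goal 9 => rw [roots 1 (-1) (-1) (-1) (-1) n (l + m + n) (l + m) (m + n) m
    (by push_cast; omega)]
  on_goal 10 => rw [roots (-1) (-1) (-1) 1 1 m l (l + m) (m + n) n (by push_cast; omega)]
  on_goal 11 => rw [roots (-1) (-1) (-1) 1 (-1) (m + n) l (l + m + n) m n (by push_cast; omega)]
  on_goal 12 => rw [roots (-1) (-1) (-1) (-1) (-1) n (l + m) (l + m + n) m (m + n)
    (by push_cast; omega)]
  all_goals push_cast; ring

lemma support_latticeTerm_subset (w : ℤ → ℂ) {p q a b c : ℕ} {s : ℂ} (hp : 0 < p) (hq : 0 < q)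
    (ha : 0 < a) (hb : 0 < b) (hc : 0 < c) (hs : s ≠ 0) :
    Function.support (latticeTerm w p q a b c s) ⊆
      Set.range fun u : Fin 12 × ℕ × ℕ × ℕ =>
        chamberPoint u.1 (u.2.1 + 1) (u.2.2.1 + 1) (u.2.2.2 + 1) := by
  rintro ⟨L, M, N⟩ h
  refine mem_range_chamberPoint ?_ ?_ ?_ ?_ ?_ ?_ <;> intro h0 <;> apply h <;>
    simp [latticeTerm, h0, hp.ne', hq.ne', ha.ne', hb.ne', hc.ne', hs]

theorem Scomb_Z3_eq_tsum_latticeTerm {w : ℤ → ℂ} (hw : Function.Periodic w 4)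
    (hw1 : ∀ k, ‖w k‖ ≤ 1) {p q a b c : ℕ} {s : ℂ} (hp : 0 < p) (hq : 0 < q) (ha : 0 < a)
    (hb : 0 < b) (hc : 0 < c) (hs : 1 < s.re) :
    Scomb (Z3 fun l m n => w (l + 2 * m + 3 * n)) p q a b c s =
      ∑' t, latticeTerm w p q a b c s t := by
  have hs0 : s ≠ 0 := by
    rintro rfl
    norm_num at hs
  have hsum : Summable fun u : Fin 12 × ℕ × ℕ × ℕ =>
      latticeTerm w p q a b c s (chamberPoint u.1 (u.2.1 + 1) (u.2.2.1 + 1) (u.2.2.2 + 1)) :=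
    (summable_latticeTerm hw1 hp hq ha hb hs).comp_injective chamberPoint_injective
  rw [← chamberPoint_injective.tsum_eq (support_latticeTerm_subset w hp hq ha hb hc hs0),
    hsum.tsum_prod, tsum_fintype, ← sum_scombTerm]
  simp only [scombTerm_Z3, latticeTerm_chamberPoint hw]

end Chambers

/-- The indicator function of the class `2` modulo `4`, which selects the coweights entering the
zeta-function of `PU(4)`. -/
def indicatorTwoModFour (k : ℤ) : ℂ := if k % 4 = 2 then 1 else 0

lemma indicatorTwoModFour_periodic : Function.Periodic indicatorTwoModFour 4 := fun k => by
  simp only [indicatorTwoModFour, Int.add_emod_right]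

lemma norm_indicatorTwoModFour_le_one (k : ℤ) : ‖indicatorTwoModFour k‖ ≤ 1 := by
  unfold indicatorTwoModFour
  split_ifs <;> simp

lemma indicatorTwoModFour_eq (k : ℤ) :
    indicatorTwoModFour k = 1 / 4 * (1 ^ k - (-I) ^ k + (-1) ^ k - I ^ k) := by
  have zpow_eq {x : ℂ} (hx : x ^ 4 = 1) : x ^ k = x ^ (k % 4) := by
    have hx0 : x ≠ 0 := by rintro rfl; norm_num at hx
    conv_lhs => rw [← Int.mul_ediv_add_emod k 4, zpow_add₀ hx0, zpow_mul]
    rw [zpow_ofNat, hx, one_zpow, one_mul]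
  have hnegI : (-I) ^ 4 = 1 := by rw [Even.neg_pow (by decide), I_pow_four]
  rw [one_zpow, zpow_eq hnegI, zpow_eq I_pow_four, zpow_eq (x := -1) (by norm_num),
    indicatorTwoModFour]
  have h_nonneg := Int.emod_nonneg k four_ne_zero
  have h_lt := Int.emod_lt_of_pos k four_pos
  interval_cases k % 4
  · norm_num
  · norm_num
  · norm_num [zpow_ofNat]
  · rw [zpow_ofNat, zpow_ofNat, zpow_ofNat, Odd.neg_pow (by decide), I_pow_three]
    norm_num
    ring

lemma ZPU4_eq : ZPU4 = Z3 fun l m n => indicatorTwoModFour (l + 2 * m + 3 * n) := by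
  unfold ZPU4 indicatorTwoModFour
  norm_cast

/-- Functional relation for `ζ₃(·,0;PU(4))`
(Theorem 7.4 of Komori–Matsumoto–Tsumura). -/
theorem functional_relation_PU4 (p q a b c : ℕ) (hp : 0 < p) (hq : 0 < q) (ha : 0 < a)
    (hb : 0 < b) (hc : 0 < c) (s : ℂ) (hs : 1 < s.re) :
    Scomb ZPU4 p q a b c s =
      (1 / 4) * (J0 p q a b c s - J1 p q a b c s + J2 p q a b c s - J3 p q a b c s) := by
  have hJ0 := isLerchSequence_one.hasSum_latticeTerm hp hq ha hb hc hs
  have hJ1 := isLerchSequence_neg_I.hasSum_latticeTerm hp hq ha hb hc hs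
  have hJ2 := isLerchSequence_neg_one.hasSum_latticeTerm hp hq ha hb hc hs
  have hJ3 := isLerchSequence_I.hasSum_latticeTerm hp hq ha hb hc hs
  rw [J0_eq_twistedJ, J1_eq_twistedJ, J2_eq_twistedJ, J3_eq_twistedJ, ZPU4_eq,
    Scomb_Z3_eq_tsum_latticeTerm indicatorTwoModFour_periodic norm_indicatorTwoModFour_le_one
      hp hq ha hb hc hs,
    ← ((((hJ0.sub hJ1).add hJ2).sub hJ3).mul_left (1 / 4)).tsum_eq]
  refine tsum_congr fun t => ?_
  simp only [latticeTerm, indicatorTwoModFour_eq]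
  ring
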